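/- Let R be a local Cohen–Macaulay ring with infinite residue field and let I be an equimultiple R-ideal. If R_𝔭 is Gorenstein for every 𝔭 ∈ Min(I), then γ(I) = max{ type((R/core(I))_𝔭) : 𝔭 ∈ Min(I) }. -/

import Mathlib

open IsLocalRing

universe u v

namespace CPU

section Defs

variable {R : Type u} [CommRing R]

/-- The minimal number of generators of a submodule, as an extended natural number. -/
noncomputable def muE {M : Type v} [AddCommGroup M] [Module R M] (N : Submodule R M) : ℕ∞ :=
  sInf {n : ℕ∞ | ∃ s : Finset M, (s.card : ℕ∞) = n ∧ Submodule.span R (s : Set M) = N}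

/-- The Krull dimension of a ring, valued in `WithBot ℕ∞`. -/
noncomputable def rDim (S : Type v) [CommRing S] : WithBot ℕ∞ :=
  ringKrullDim S

/-- `J` is a reduction of `I`. -/
def IsReduction (J I : Ideal R) : Prop :=
  J ≤ I ∧ ∃ r : ℕ, I ^ (r + 1) = J * I ^ r

/-- `J` is a minimal reduction of `I`. -/
def IsMinimalReduction (J I : Ideal R) : Prop :=
  IsReduction J I ∧ ∀ J' : Ideal R, IsReduction J' I → J' ≤ J → J' = J

/-- The core of an ideal: the intersection of all of its minimal reductions. -/
noncomputable def core (I : Ideal R) : Ideal R :=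
  sInf {J : Ideal R | IsMinimalReduction J I}

/-- The reduction number of `I`. -/
noncomputable def reductionNumber (I : Ideal R) : ℕ∞ :=
  sInf {n : ℕ∞ | ∃ r : ℕ, (r : ℕ∞) = n ∧ ∃ J : Ideal R,
    IsMinimalReduction J I ∧ I ^ (r + 1) = J * I ^ r}

/-- `γ(I)`: the least number of minimal reductions whose intersection is the core. -/
noncomputable def gamma (I : Ideal R) : ℕ∞ :=
  sInf {n : ℕ∞ | ∃ t : ℕ, (t : ℕ∞) = n ∧ ∃ Js : Fin t → Ideal R,
    (∀ i, IsMinimalReduction (Js i) I) ∧ core I = ⨅ i, Js i}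

/-- The height of an ideal. -/
noncomputable def ht (I : Ideal R) : WithBot ℕ∞ :=
  ⨅ (p : PrimeSpectrum R) (_ : I ≤ p.asIdeal),
    rDim (Localization.AtPrime p.asIdeal)

/-- The Krull dimension of the special fiber ring of `I`,
i.e. the analytic spread of `I`. -/
noncomputable def fiberDim [IsLocalRing R] (I : Ideal R) : WithBot ℕ∞ :=
  rDim (↥(reesAlgebra I) ⧸
    (Ideal.map (algebraMap R ↥(reesAlgebra I)) (maximalIdeal R)))

/-- The condition `G_s`. -/
def Gcond (I : Ideal R) (s : ℕ) : Prop :=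
  ∀ p : PrimeSpectrum R, I ≤ p.asIdeal →
    rDim (Localization.AtPrime p.asIdeal) < (s : WithBot ℕ∞) →
    (muE (Ideal.map (algebraMap R (Localization.AtPrime p.asIdeal)) I) : WithBot ℕ∞) ≤
      rDim (Localization.AtPrime p.asIdeal)

/-- Depth of a module over a local ring, via lengths of regular sequences in the
maximal ideal. -/
noncomputable def mDepth (R : Type u) [CommRing R] [IsLocalRing R]
    (M : Type v) [AddCommGroup M] [Module R M] : ℕ∞ :=
  sSup {n : ℕ∞ | ∃ rs : List R, (∀ x ∈ rs, x ∈ maximalIdeal R) ∧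
    RingTheory.Sequence.IsRegular M rs ∧ (rs.length : ℕ∞) = n}

/-- Depth of the quotient `R/K` of a local ring `R`. -/
noncomputable def qDepth (R : Type u) [CommRing R] [IsLocalRing R] (K : Ideal R) : ℕ∞ :=
  mDepth R (R ⧸ K)

/-- The socle of `R/K`, for `R` local. -/
noncomputable def socle (R : Type u) [CommRing R] [IsLocalRing R] (K : Ideal R) :
    Ideal (R ⧸ K) :=
  Submodule.colon (⊥ : Ideal (R ⧸ K)) (Ideal.map (Ideal.Quotient.mk K) (maximalIdeal R))

/-- The Cohen–Macaulay type of the quotient `R/K` of a local ring `R`. -/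
noncomputable def qType (R : Type u) [CommRing R] [IsLocalRing R] (K : Ideal R) : ℕ∞ :=
  sInf {n : ℕ∞ | ∃ rs : List R, (∀ x ∈ rs, x ∈ maximalIdeal R) ∧
    RingTheory.Sequence.IsRegular (R ⧸ K) rs ∧ (rs.length : ℕ∞) = qDepth R K ∧
    muE (socle R (K ⊔ Ideal.ofList rs)) = n}

/-- Cohen–Macaulayness for a quotient `R/K` of a local ring `R`. -/
def IsCMQuot (R : Type u) [CommRing R] [IsLocalRing R] (K : Ideal R) : Prop :=
  rDim (R ⧸ K) = (qDepth R K : WithBot ℕ∞)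

/-- A Cohen–Macaulay local ring: depth equals Krull dimension. -/
def IsCMLocalRing (R : Type u) [CommRing R] [IsLocalRing R] : Prop :=
  rDim R = (qDepth R (⊥ : Ideal R) : WithBot ℕ∞)

/-- A Gorenstein local ring: Cohen–Macaulay of type one. -/
def IsGorensteinLocalRing (R : Type u) [CommRing R] [IsLocalRing R] : Prop :=
  IsCMLocalRing R ∧ qType R (⊥ : Ideal R) = 1

/-- Gorensteinness of the quotient ring `R/K` of a local ring. -/
def IsGorQuot (R : Type u) [CommRing R] [IsLocalRing R] (K : Ideal R) : Prop :=
  IsCMQuot R K ∧ qType R K = 1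

/-- A regular local ring: the maximal ideal is generated by `dim R` elements. -/
def IsRegularLocal (R : Type u) [CommRing R] [IsLocalRing R] : Prop :=
  IsNoetherianRing R ∧ (muE (maximalIdeal R) : WithBot ℕ∞) = rDim R

/-- Serre's condition `S₂` for the quotient ring `R/K`. -/
def QuotS2 (K : Ideal R) : Prop :=
  ∀ (q : Ideal R) (hq : q.IsPrime), K ≤ q →
    letI := hq
    min 2 (rDim ((Localization.AtPrime q) ⧸
        (Ideal.map (algebraMap R (Localization.AtPrime q)) K)))
      ≤ (qDepth (Localization.AtPrime q)
          (Ideal.map (algebraMap R (Localization.AtPrime q)) K) : WithBot ℕ∞)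

/-- `K` is an `s`-residual intersection of `I`. -/
def IsResidualIntersection (I K : Ideal R) (s : ℕ) : Prop :=
  K ≠ ⊤ ∧ ht I ≤ (s : WithBot ℕ∞) ∧ (s : WithBot ℕ∞) ≤ ht K ∧
    ∃ a : Ideal R, a ≤ I ∧ (∃ f : Finset R, f.card ≤ s ∧ Ideal.span (f : Set R) = a) ∧
      K = Submodule.colon a I

/-- `K` is a geometric `s`-residual intersection of `I`. -/
def IsGeometricRI (I K : Ideal R) (s : ℕ) : Prop :=
  IsResidualIntersection I K s ∧ (s : WithBot ℕ∞) + 1 ≤ ht (I ⊔ K)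

/-- `I` is weakly `s`-residually `S₂`. -/
def WeaklyResS2 (I : Ideal R) (s : ℕ) : Prop :=
  ∀ i ≤ s, ∀ K : Ideal R, IsGeometricRI I K i → QuotS2 K

/-- The condition `AN_s` for `I`. -/
def ANcond [IsLocalRing R] (I : Ideal R) (s : ℕ) : Prop :=
  ∀ i ≤ s, ∀ K : Ideal R, IsResidualIntersection I K i → IsCMQuot R K

/-- The condition `AN_s⁻` for `I`. -/
def ANminus [IsLocalRing R] (I : Ideal R) (s : ℕ) : Prop :=
  ∀ i ≤ s, ∀ K : Ideal R, IsGeometricRI I K i → IsCMQuot R K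

/-- `I` is universally weakly `s`-residually `S₂`: for every finite set of
variables, the extension of `I` to `R(x₁, …, x_n)` is weakly `s`-residually `S₂`. -/
def UnivWeaklyResS2 [IsLocalRing R] (I : Ideal R) (s : ℕ) : Prop :=
  ∀ (n : ℕ)
    (hP : (Ideal.map (MvPolynomial.C (σ := Fin n)) (maximalIdeal R)).IsPrime),
    letI := hP
    WeaklyResS2 (Ideal.map
      ((algebraMap (MvPolynomial (Fin n) R)
        (Localization.AtPrime
          (Ideal.map (MvPolynomial.C (σ := Fin n)) (maximalIdeal R)))).comp
        (MvPolynomial.C)) I) s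

/-- The `j`-th Fitting ideal of (the module) `I`. -/
noncomputable def fittingIdeal (I : Ideal R) (j : ℕ) : Ideal R :=
  ⨆ (n : ℕ) (π : (Fin n → R) →ₗ[R] R) (_ : LinearMap.range π = I),
    Ideal.span {d : R | ∃ (v : Fin (n - j) → (Fin n → R)) (r : Fin (n - j) → Fin n),
      (∀ k, π (v k) = 0) ∧ d = Matrix.det (Matrix.of fun i k => v k (r i))}

/-- The set `Q(I)` of primes containing `Fitt_ℓ(I)` at which `R` has dimension `ℓ`
and `I` has analytic spread `ℓ`. -/
def QSet [IsLocalRing R] (I : Ideal R) (l : ℕ) : Set (PrimeSpectrum R) :=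
  {p | fittingIdeal I l ≤ p.asIdeal ∧
    rDim (Localization.AtPrime p.asIdeal) = (l : WithBot ℕ∞) ∧
    fiberDim (Ideal.map (algebraMap R (Localization.AtPrime p.asIdeal)) I)
      = (l : WithBot ℕ∞)}

/-- An ideal is integrally closed if it admits no larger ideal of which it is a
reduction. -/
def IsIntClosedIdeal (I : Ideal R) : Prop :=
  ∀ J : Ideal R, IsReduction I J → J = I

/-- A normal ideal: all powers are integrally closed. -/
def IsNormalIdeal (I : Ideal R) : Prop :=
  ∀ j : ℕ, IsIntClosedIdeal (I ^ j)

/-- `φ` is a presentation matrix of the ideal `I` (with `n = μ(I)` rows). -/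
def Presents {n m : ℕ} (φ : Matrix (Fin n) (Fin m) R) (I : Ideal R) : Prop :=
  muE I = (n : ℕ∞) ∧ ∃ π : (Fin n → R) →ₗ[R] R, LinearMap.range π = I ∧
    LinearMap.range (Matrix.toLin' φ) = LinearMap.ker π

/-- The ideal of `t × t` minors of a matrix. -/
noncomputable def minorsIdeal {n m : ℕ} (t : ℕ) (φ : Matrix (Fin n) (Fin m) R) : Ideal R :=
  Ideal.span {d : R | ∃ (r : Fin t → Fin n) (c : Fin t → Fin m),
    d = (φ.submatrix r c).det}

/-- The grade of an ideal: the supremum of lengths of regular sequences contained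
in it. -/
noncomputable def grade (I : Ideal R) : ℕ∞ :=
  sSup {n : ℕ∞ | ∃ rs : List R, (∀ x ∈ rs, x ∈ I) ∧
    RingTheory.Sequence.IsRegular R rs ∧ (rs.length : ℕ∞) = n}

end Defs

/-- `M` has projective dimension at most `n` over `R`. -/
def ProjDimLE (R : Type u) [CommRing R] :
    (n : ℕ) → (M : Type u) → [AddCommGroup M] → [Module R M] → Prop
  | 0, M, _, _ => Module.Projective R M
  | n + 1, M, _, _ => ∃ (k : ℕ) (f : (Fin k → R) →ₗ[R] M), Function.Surjective f ∧
      ProjDimLE R n ↥(LinearMap.ker f)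

section Defs2

variable {R : Type u} [CommRing R]

/-- `M` has projective dimension exactly `n` over `R`. -/
def ProjDimEq (R : Type u) [CommRing R] (M : Type u) [AddCommGroup M] [Module R M]
    (n : ℕ) : Prop :=
  ProjDimLE R n M ∧ ∀ m : ℕ, ProjDimLE R m M → n ≤ m

/-- A perfect ideal: the projective dimension of `R/I` equals the grade of `I`. -/
def IsPerfectIdeal (I : Ideal R) : Prop :=
  ∃ g : ℕ, grade I = (g : ℕ∞) ∧ ProjDimEq R (R ⧸ I) g

/-- The multiplicative set which is the complement of the union of the associated
primes of `R/H`. -/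
def assComplement (H : Ideal R) : Submonoid R where
  carrier := {r : R | ∀ p ∈ associatedPrimes R (R ⧸ H), r ∉ p}
  one_mem' := fun p hp => (Ideal.ne_top_iff_one p).mp hp.1.ne_top
  mul_mem' := fun {a b} ha hb p hp hab =>
    (hp.1.mem_or_mem hab).elim (ha p hp) (hb p hp)

/-- The `j`-th symbolic power of `H`. -/
noncomputable def symbolicPower (H : Ideal R) (j : ℕ) : Ideal R :=
  Ideal.comap (algebraMap R (Localization (assComplement H)))
    (Ideal.map (algebraMap R (Localization (assComplement H))) (H ^ j))

/-- Serre's condition `S₂` for a module. -/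
def ModuleS2 (S : Type u) [CommRing S] (M : Type v) [AddCommGroup M] [Module S M] : Prop :=
  ∀ (q : Ideal S) (hq : q.IsPrime),
    letI := hq
    min 2 (rDim ((Localization.AtPrime q) ⧸
        (Module.annihilator (Localization.AtPrime q) (LocalizedModule q.primeCompl M))))
      ≤ (mDepth (Localization.AtPrime q) (LocalizedModule q.primeCompl M) : WithBot ℕ∞)

/-- `M` is a maximal Cohen–Macaulay `S`-module. -/
def IsMCM (S : Type u) [CommRing S] (M : Type v) [AddCommGroup M] [Module S M] : Prop :=
  ∀ (q : Ideal S) (hq : q.IsMaximal),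
    letI := hq.isPrime
    (mDepth (Localization.AtPrime q) (LocalizedModule q.primeCompl M) : WithBot ℕ∞) =
      rDim (Localization.AtPrime q)

end Defs2

/-!
Let `J` be a minimal reduction of `I`. It is generated by a regular sequence of length `ht I`, so
`R ⧸ J` is unmixed with associated primes `Min(I)`, and `(R ⧸ J)_𝔭` has a simple socle for every
`𝔭 ∈ Min(I)` because `R_𝔭` is Gorenstein. Hence an intersection of `t` minimal reductions has type
at most `t` at every `𝔭`, which bounds the types of `R ⧸ core I` by `γ(I)`.

Conversely, by unmixedness an intersection of minimal reductions equals `core I` as soon as it does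
so locally at every `𝔭 ∈ Min(I)`. If a socle element of `(R ⧸ core I)_𝔭` is missed by some minimal
reduction, it is missed by almost all reductions on any line `(a + u (b - a))` through that one,
as one sees over `R_𝔭⟦X⟧`. Since the residue field is infinite, one minimal reduction misses a
chosen socle element at every `𝔭` simultaneously, so intersecting with it lowers by at least one
the length of each nonzero socle; after `max type` steps nothing is left outside `core I`.
-/

section RegularElements

open Pointwise

variable {A M N : Type*} [CommRing A] [AddCommGroup M] [Module A M] [AddCommGroup N] [Module A N]

variable [IsNoetherianRing A]

lemma notMem_of_mem_associatedPrimes {x : A} (hx : IsSMulRegular M x) {P : Ideal A}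
    (hP : P ∈ associatedPrimes A M) : x ∉ P := fun hxP ↦
  (biUnion_associatedPrimes_eq_compl_regular A M).subset (Set.mem_biUnion hP hxP) hx

lemma isSMulRegular_of_forall_notMem_associatedPrimes {x : A}
    (hx : ∀ P ∈ associatedPrimes A M, x ∉ P) : IsSMulRegular M x := by
  by_contra h
  obtain ⟨P, hP, hxP⟩ := Set.mem_iUnion₂.mp
    ((biUnion_associatedPrimes_eq_compl_regular A M).superset h)
  exact hx P hP hxP

variable [Module.Finite A M] [Module.Finite A N]

lemma exists_mem_associatedPrimes_ge {I : Ideal A} (h : ∀ x ∈ I, ¬ IsSMulRegular M x) :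
    ∃ P ∈ associatedPrimes A M, I ≤ P := by
  refine (Ideal.subset_union_prime_finite (associatedPrimes.finite A M) ⊥ ⊥
    fun P hP _ _ ↦ hP.isPrime).mp ?_
  rw [biUnion_associatedPrimes_eq_compl_regular]
  exact h

lemma exists_mem_isSMulRegular_and {I : Ideal A} (hM : ∃ x ∈ I, IsSMulRegular M x)
    (hN : ∃ y ∈ I, IsSMulRegular N y) :
    ∃ z ∈ I, IsSMulRegular M z ∧ IsSMulRegular N z := by
  by_contra! h
  obtain ⟨P, hP, hIP⟩ := exists_mem_associatedPrimes_ge (M := M × N) (I := I)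
    fun z hz hreg ↦ (Prod.isSMulRegular_iff.mp hreg).elim (h z hz)
  rw [associatedPrimes.prod] at hP
  obtain ⟨x, hx, hxM⟩ := hM
  obtain ⟨y, hy, hyN⟩ := hN
  exact hP.elim (fun hP ↦ notMem_of_mem_associatedPrimes hxM hP (hIP hx))
    fun hP ↦ notMem_of_mem_associatedPrimes hyN hP (hIP hy)

end RegularElements

section Socle

open Pointwise RingTheory.Sequence

variable (A : Type*) [CommRing A] [IsLocalRing A]

/-- The socle of a module over a local ring: the elements annihilated by the maximal ideal.
For `M = A ⧸ K` it is `socle A K`, regarded as an `A`-submodule. -/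
def moduleSocle (M : Type*) [AddCommGroup M] [Module A M] : Submodule A M :=
  Submodule.torsionBySet A M (maximalIdeal A)

variable {A} {M N : Type*} [AddCommGroup M] [Module A M] [AddCommGroup N] [Module A N]

lemma mem_moduleSocle {m : M} : m ∈ moduleSocle A M ↔ ∀ a ∈ maximalIdeal A, a • m = 0 := by
  simp [moduleSocle, Submodule.mem_torsionBySet_iff]

lemma mkQ_mem_moduleSocle {L : Submodule A M} {m : M} :
    L.mkQ m ∈ moduleSocle A (M ⧸ L) ↔ ∀ a ∈ maximalIdeal A, a • m ∈ L := by
  simp only [mem_moduleSocle, Submodule.mkQ_apply, ← Submodule.Quotient.mk_smul,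
    Submodule.Quotient.mk_eq_zero]

lemma map_moduleSocle_of_injective {f : M →ₗ[A] N} (hf : Function.Injective f) :
    (moduleSocle A M).map f = moduleSocle A N ⊓ LinearMap.range f := by
  ext n
  simp only [Submodule.mem_map, Submodule.mem_inf, LinearMap.mem_range, mem_moduleSocle]
  constructor
  · rintro ⟨m, hm, rfl⟩
    exact ⟨fun a ha ↦ by rw [← map_smul, hm a ha, map_zero], m, rfl⟩
  · rintro ⟨hn, m, rfl⟩
    exact ⟨m, fun a ha ↦ hf (by rw [map_smul, hn a ha, map_zero]), rfl⟩

lemma length_moduleSocle_eq_of_injective {f : M →ₗ[A] N} (hf : Function.Injective f)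
    (h : moduleSocle A N ≤ LinearMap.range f) :
    Module.length A (moduleSocle A M) = Module.length A (moduleSocle A N) := by
  rw [← inf_eq_left.mpr h, ← map_moduleSocle_of_injective hf]
  exact (Submodule.equivMapOfInjective f hf _).length_eq

lemma length_moduleSocle_congr (e : M ≃ₗ[A] N) :
    Module.length A (moduleSocle A M) = Module.length A (moduleSocle A N) :=
  length_moduleSocle_eq_of_injective (f := e.toLinearMap) e.injective (by simp)

lemma moduleSocle_eq_bot_of_isSMulRegular {x : A} (hx : x ∈ maximalIdeal A)
    (hreg : IsSMulRegular M x) : moduleSocle A M = ⊥ :=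
  (Submodule.eq_bot_iff _).mpr fun _ hm ↦
    hreg.right_eq_zero_of_smul (mem_moduleSocle.mp hm x hx)

lemma moduleSocle_eq_bot_iff [IsNoetherianRing A] [Module.Finite A M] :
    moduleSocle A M = ⊥ ↔ ∃ x ∈ maximalIdeal A, IsSMulRegular M x := by
  refine ⟨fun hbot ↦ ?_, fun ⟨x, hx, hreg⟩ ↦ moduleSocle_eq_bot_of_isSMulRegular hx hreg⟩
  by_contra! h
  obtain ⟨P, hP, hle⟩ := exists_mem_associatedPrimes_ge h
  obtain ⟨hprime, m, hm⟩ := isAssociatedPrime_iff.mp hP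
  have hann (a : A) : a ∈ P ↔ a • m = 0 := by
    rw [hm, Submodule.mem_colon_singleton, Submodule.mem_bot]
  have hsoc : m ∈ moduleSocle A M := mem_moduleSocle.mpr fun a ha ↦ (hann a).mp (hle ha)
  rw [hbot, Submodule.mem_bot] at hsoc
  exact hprime.ne_top ((Ideal.eq_top_iff_one P).mpr ((hann 1).mpr (by rw [hsoc, smul_zero])))

lemma length_moduleSocle_quotSMulTop_mul {x y : A} (hx : IsSMulRegular M x)
    (hy : IsSMulRegular M y) (hxm : x ∈ maximalIdeal A) :
    Module.length A (moduleSocle A (QuotSMulTop x M)) =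
      Module.length A (moduleSocle A (QuotSMulTop (y * x) M)) := by
  have hmem (z : A) (m : M) : m ∈ z • (⊤ : Submodule A M) ↔ ∃ n, z • n = m := by
    simp [Submodule.mem_smul_pointwise_iff_exists]
  let mulY : QuotSMulTop x M →ₗ[A] QuotSMulTop (y * x) M :=
    Submodule.mapQ _ _ (LinearMap.lsmul A M y) fun m hm ↦ by
      obtain ⟨n, rfl⟩ := (hmem _ _).mp hm
      exact (hmem _ _).mpr ⟨n, mul_smul _ _ _⟩
  refine length_moduleSocle_eq_of_injective (f := mulY) ?_ ?_
  · refine (injective_iff_map_eq_zero mulY).mpr fun m hm ↦ ?_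
    obtain ⟨m, rfl⟩ := Submodule.mkQ_surjective _ m
    simp only [mulY, Submodule.mkQ_apply, Submodule.mapQ_apply, Submodule.Quotient.mk_eq_zero,
      hmem, LinearMap.lsmul_apply] at hm ⊢
    exact hm.imp fun n hn ↦ hy (by simpa only [mul_smul] using hn)
  · intro m hm
    obtain ⟨m, rfl⟩ := Submodule.mkQ_surjective _ m
    obtain ⟨n, hn⟩ := (hmem _ _).mp (mkQ_mem_moduleSocle.mp hm x hxm)
    have hyn : y • n = m := hx (by simpa only [← mul_smul, mul_comm x] using hn)
    exact ⟨Submodule.Quotient.mk n, by simp [mulY, hyn]⟩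

lemma length_moduleSocle_quotSMulTop_eq {x y : A} (hx : IsSMulRegular M x)
    (hy : IsSMulRegular M y) (hxm : x ∈ maximalIdeal A) (hym : y ∈ maximalIdeal A) :
    Module.length A (moduleSocle A (QuotSMulTop x M)) =
      Module.length A (moduleSocle A (QuotSMulTop y M)) := by
  rw [length_moduleSocle_quotSMulTop_mul hx hy hxm, mul_comm,
    ← length_moduleSocle_quotSMulTop_mul hy hx hym]

end Socle

section RegularSequences

open Pointwise RingTheory.Sequence

variable {A M : Type*} [CommRing A] [IsLocalRing A] [IsNoetherianRing A] [AddCommGroup M]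
  [Module A M] [Module.Finite A M]

lemma isWeaklyRegular_cons_iff_isSMulRegular_quotient {x : A} {xs : List A}
    (hx : x ∈ maximalIdeal A) (hxs : ∀ y ∈ xs, y ∈ maximalIdeal A) :
    IsWeaklyRegular M (x :: xs) ↔
      IsWeaklyRegular M xs ∧ IsSMulRegular (M ⧸ (Ideal.ofList xs • ⊤ : Submodule A M)) x := by
  have hperm : (xs ++ [x]).Perm (x :: xs) := List.perm_append_singleton x xs
  have hmem : ∀ y ∈ x :: xs, y ∈ maximalIdeal A := List.forall_mem_cons.mpr ⟨hx, hxs⟩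
  rw [← isWeaklyRegular_singleton_iff, ← isWeaklyRegular_append_iff]
  exact ⟨fun h ↦ isWeaklyRegular_of_perm_of_subset_maximalIdeal h hperm.symm hmem,
    fun h ↦ isWeaklyRegular_of_perm_of_subset_maximalIdeal h hperm
      fun y hy ↦ hmem y (hperm.subset hy)⟩

-- Replace the last elements of both sequences by an element `z` regular modulo both of the shorter
-- sequences, move `z` to the front, and pass to `M / zM`.
theorem length_moduleSocle_eq_of_isWeaklyRegular {xs ys : List A} (hlen : xs.length = ys.length)
    (hxs : ∀ x ∈ xs, x ∈ maximalIdeal A) (hys : ∀ y ∈ ys, y ∈ maximalIdeal A)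
    (hx : IsWeaklyRegular M xs) (hy : IsWeaklyRegular M ys) :
    Module.length A (moduleSocle A (M ⧸ (Ideal.ofList xs • ⊤ : Submodule A M))) =
      Module.length A (moduleSocle A (M ⧸ (Ideal.ofList ys • ⊤ : Submodule A M))) := by
  induction xs generalizing M ys with
  | nil => rw [List.length_eq_zero_iff.mp hlen.symm]
  | cons x xs ih =>
    obtain _ | ⟨y, ys⟩ := ys
    · simp at hlen
    obtain ⟨hxm, hxsm⟩ := List.forall_mem_cons.mp hxs
    obtain ⟨hym, hysm⟩ := List.forall_mem_cons.mp hys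
    obtain ⟨hxs_reg, hx_reg⟩ := (isWeaklyRegular_cons_iff_isSMulRegular_quotient hxm hxsm).mp hx
    obtain ⟨hys_reg, hy_reg⟩ := (isWeaklyRegular_cons_iff_isSMulRegular_quotient hym hysm).mp hy
    obtain ⟨z, hzm, hzx, hzy⟩ := exists_mem_isSMulRegular_and ⟨x, hxm, hx_reg⟩ ⟨y, hym, hy_reg⟩
    have hz_swap {w : A} {ws : List A} (hw : w ∈ maximalIdeal A)
        (hw_reg : IsSMulRegular (M ⧸ (Ideal.ofList ws • ⊤ : Submodule A M)) w)
        (hz_reg : IsSMulRegular (M ⧸ (Ideal.ofList ws • ⊤ : Submodule A M)) z) :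
        Module.length A (moduleSocle A (M ⧸ (Ideal.ofList (w :: ws) • ⊤ : Submodule A M))) =
          Module.length A (moduleSocle A
            (QuotSMulTop z M ⧸ (Ideal.ofList ws • ⊤ : Submodule A (QuotSMulTop z M)))) := by
      rw [length_moduleSocle_congr (Submodule.quotOfListConsSMulTopEquivQuotSMulTopOuter M w ws),
        length_moduleSocle_quotSMulTop_eq hw_reg hz_reg hw hzm,
        ← length_moduleSocle_congr (Submodule.quotOfListConsSMulTopEquivQuotSMulTopOuter M z ws),
        length_moduleSocle_congr (Submodule.quotOfListConsSMulTopEquivQuotSMulTopInner M z ws)]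
    have hz_front {ws : List A} (hws : ∀ w ∈ ws, w ∈ maximalIdeal A)
        (hws_reg : IsWeaklyRegular M ws)
        (hz_reg : IsSMulRegular (M ⧸ (Ideal.ofList ws • ⊤ : Submodule A M)) z) :
        IsWeaklyRegular (QuotSMulTop z M) ws :=
      ((isWeaklyRegular_cons_iff M z ws).mp
        ((isWeaklyRegular_cons_iff_isSMulRegular_quotient hzm hws).mpr ⟨hws_reg, hz_reg⟩)).2
    rw [hz_swap hxm hx_reg hzx, hz_swap hym hy_reg hzy]
    exact ih (by simpa using hlen) hxsm hysm (hz_front hxsm hxs_reg hzx)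
      (hz_front hysm hys_reg hzy)

lemma exists_isWeaklyRegular_cons {xs ys : List A} (hlt : xs.length < ys.length)
    (hxs : ∀ x ∈ xs, x ∈ maximalIdeal A) (hys : ∀ y ∈ ys, y ∈ maximalIdeal A)
    (hx : IsWeaklyRegular M xs) (hy : IsWeaklyRegular M ys) :
    ∃ z ∈ maximalIdeal A, IsWeaklyRegular M (z :: xs) := by
  have hsplit : ys = ys.take xs.length ++ ys[xs.length] :: ys.drop (xs.length + 1) := by simp
  rw [hsplit, isWeaklyRegular_append_iff, isWeaklyRegular_cons_iff] at hy
  have hbot := moduleSocle_eq_bot_of_isSMulRegular (hys _ (List.getElem_mem hlt)) hy.2.1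
  have hlength := length_moduleSocle_eq_of_isWeaklyRegular (xs := xs) (ys := ys.take xs.length)
    (by simp [hlt.le]) hxs (fun y hy ↦ hys y (List.mem_of_mem_take hy)) hx hy.1
  rw [hbot, Module.length_bot, Module.length_eq_zero_iff, Submodule.subsingleton_iff_eq_bot,
    moduleSocle_eq_bot_iff] at hlength
  obtain ⟨z, hzm, hz⟩ := hlength
  exact ⟨z, hzm, (isWeaklyRegular_cons_iff_isSMulRegular_quotient hzm hxs).mpr ⟨hx, hz⟩⟩

lemma exists_isWeaklyRegular_append {xs ys : List A} (hle : xs.length ≤ ys.length)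
    (hxs : ∀ x ∈ xs, x ∈ maximalIdeal A) (hys : ∀ y ∈ ys, y ∈ maximalIdeal A)
    (hx : IsWeaklyRegular M xs) (hy : IsWeaklyRegular M ys) :
    ∃ zs : List A, (∀ z ∈ zs, z ∈ maximalIdeal A) ∧ zs.length + xs.length = ys.length ∧
      IsWeaklyRegular M (zs ++ xs) := by
  obtain ⟨n, hn⟩ := Nat.exists_eq_add_of_le' hle
  induction n generalizing xs with
  | zero => exact ⟨[], by simp, by simp [hn], hx⟩
  | succ n ih =>
    obtain ⟨z, hzm, hz⟩ := exists_isWeaklyRegular_cons (by lia) hxs hys hx hy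
    obtain ⟨zs, hzs, hlen, hreg⟩ := ih (xs := z :: xs) (by simp; lia)
      (List.forall_mem_cons.mpr ⟨hzm, hxs⟩) hz (by simp; lia)
    refine ⟨zs ++ [z], ?_, by simp at hlen ⊢; lia, by simpa using hreg⟩
    simpa [or_imp, forall_and] using ⟨hzs, hzm⟩

end RegularSequences

section MinimalGenerators

variable {A M : Type*} [CommRing A] [AddCommGroup M] [Module A M]

lemma length_sup_le (N P : Submodule A M) :
    Module.length A (N ⊔ P : Submodule A M) ≤ Module.length A N + Module.length A P := by
  rw [Submodule.sup_eq_range, ← Module.length_prod]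
  exact Module.length_le_of_surjective _ (LinearMap.surjective_rangeRestrict _)

lemma muE_le_length (N : Submodule A M) : muE N ≤ Module.length A N := by
  classical
  rcases eq_or_ne (Module.length A N) ⊤ with htop | hfin
  · exact htop ▸ le_top
  obtain ⟨_, _⟩ := isFiniteLength_iff_isNoetherian_isArtinian.mp (Module.length_ne_top_iff.mp hfin)
  have hgreedy (n : ℕ) : ∃ s : Finset N, s.card ≤ n ∧
      (Submodule.span A (s : Set N) = ⊤ ∨ n ≤ Module.length A (Submodule.span A (s : Set N))) := by
    induction n with
    | zero => exact ⟨∅, by simp⟩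
    | succ n ih =>
      obtain ⟨s, hs, htop | hlen⟩ := ih
      · exact ⟨s, by lia, .inl htop⟩
      by_cases htop : Submodule.span A (s : Set N) = ⊤
      · exact ⟨s, by lia, .inl htop⟩
      obtain ⟨x, -, hx⟩ := SetLike.exists_of_lt (lt_top_iff_ne_top.mpr htop)
      refine ⟨insert x s, (Finset.card_insert_le x s).trans (by lia), .inr ?_⟩
      have hlt : Submodule.span A (s : Set N) < Submodule.span A (insert x (s : Set N)) :=
        SetLike.lt_iff_le_and_exists.mpr ⟨Submodule.span_mono (by simp), x,
          Submodule.subset_span (by simp), hx⟩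
      rw [Module.length_submodule] at hlen
      rw [Finset.coe_insert, Module.length_submodule]
      push_cast
      exact (add_le_add_left hlen 1).trans (Order.height_add_one_le hlt)
  obtain ⟨n, hn⟩ := ENat.ne_top_iff_exists.mp hfin
  obtain ⟨s, hs, hspan⟩ := hgreedy n
  have htop : Submodule.span A (s : Set N) = ⊤ :=
    hspan.elim id fun hlen ↦ by
      by_contra h
      exact (Submodule.length_lt h).not_ge (hn ▸ hlen)
  refine sInf_le_of_le ⟨s.image N.subtype, rfl, ?_⟩ ?_
  · rw [Finset.coe_image, ← Submodule.map_span, htop, Submodule.map_subtype_top]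
  · rw [← hn]
    exact_mod_cast Finset.card_image_le.trans hs

lemma muE_restrictScalars {B : Type*} [CommRing B] [Algebra A B] [Module B M]
    [IsScalarTower A B M] (h : Function.Surjective (algebraMap A B)) (N : Submodule B M) :
    muE (N.restrictScalars A) = muE N := by
  simp only [muE, ← Submodule.restrictScalars_span A B h, Submodule.restrictScalars_inj]

variable [IsLocalRing A]

lemma length_span_singleton_le_one {x : M} (hx : x ∈ moduleSocle A M) :
    Module.length A (A ∙ x) ≤ 1 := by
  have hker : maximalIdeal A ≤ LinearMap.ker (LinearMap.toSpanSingleton A M x) :=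
    fun a ha ↦ by simpa using mem_moduleSocle.mp hx a ha
  let f : (A ⧸ maximalIdeal A) →ₗ[A] M := Submodule.liftQ _ _ hker
  have hf : LinearMap.range f = A ∙ x := by
    rw [Submodule.range_liftQ, LinearMap.range_toSpanSingleton]
  have : IsSimpleModule A (A ⧸ maximalIdeal A) :=
    isSimpleModule_iff_isCoatom.mpr (maximalIdeal.isMaximal A).out
  rw [← hf, ← Module.length_eq_one A (A ⧸ maximalIdeal A)]
  exact Module.length_le_of_surjective _ f.surjective_rangeRestrict

lemma length_span_le_card {s : Finset M} (hs : ∀ x ∈ s, x ∈ moduleSocle A M) :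
    Module.length A (Submodule.span A (s : Set M)) ≤ s.card := by
  classical
  induction s using Finset.induction_on with
  | empty => rw [Finset.coe_empty, Submodule.span_empty, Module.length_bot]; exact bot_le
  | insert x s hx ih =>
    rw [Finset.forall_mem_insert] at hs
    rw [Finset.coe_insert, Submodule.span_insert, Finset.card_insert_of_notMem hx, add_comm]
    push_cast
    exact (length_sup_le _ _).trans (add_le_add (length_span_singleton_le_one hs.1) (ih hs.2))

lemma muE_eq_length_of_le_moduleSocle {N : Submodule A M} (hN : N ≤ moduleSocle A M) :
    muE N = Module.length A N := by
  refine le_antisymm (muE_le_length N) (le_sInf ?_)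
  rintro _ ⟨s, rfl, rfl⟩
  exact length_span_le_card fun x hx ↦ hN (Submodule.subset_span hx)

lemma socle_restrictScalars (K : Ideal A) :
    (socle A K).restrictScalars A = moduleSocle A (A ⧸ K) := by
  ext y
  rw [Submodule.restrictScalars_mem, socle, Ideal.map, Submodule.colon_span, mem_moduleSocle,
    Submodule.mem_colon]
  simp [Algebra.smul_def, mul_comm y]

lemma muE_socle (K : Ideal A) :
    muE (socle A K) = Module.length A (moduleSocle A (A ⧸ K)) := by
  rw [← muE_restrictScalars (A := A) Ideal.Quotient.mk_surjective, socle_restrictScalars,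
    muE_eq_length_of_le_moduleSocle le_rfl]

end MinimalGenerators

section CohenMacaulay

open Pointwise RingTheory.Sequence

variable {A M : Type*} [CommRing A] [AddCommGroup M] [Module A M]

lemma ringKrullDim_quotient_add_one_le_of_lt {P Q : Ideal A} [P.IsPrime] (h : P < Q) :
    ringKrullDim (A ⧸ Q) + 1 ≤ ringKrullDim (A ⧸ P) := by
  obtain ⟨hle, x, hxQ, hxP⟩ := SetLike.lt_iff_le_and_exists.mp h
  have hx : Ideal.Quotient.mk P x ∈ nonZeroDivisors (A ⧸ P) :=
    mem_nonZeroDivisors_of_ne_zero (mt Ideal.Quotient.eq_zero_iff_mem.mp hxP)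
  have hspan : ∀ a ∈ Ideal.span {Ideal.Quotient.mk P x}, Ideal.Quotient.factor hle a = 0 := by
    have hker : Ideal.Quotient.mk P x ∈ RingHom.ker (Ideal.Quotient.factor hle) := by
      rw [RingHom.mem_ker, Ideal.Quotient.factor_mk, Ideal.Quotient.eq_zero_iff_mem.mpr hxQ]
    exact fun a ha ↦ (Ideal.span_singleton_le_iff_mem _).mpr hker ha
  refine le_trans ?_ (ringKrullDim_quotient_succ_le_of_nonZeroDivisor hx)
  gcongr
  exact ringKrullDim_le_of_surjective (Ideal.Quotient.lift _ _ hspan)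
    (Ideal.Quotient.lift_surjective_of_surjective _ _ (Ideal.Quotient.factor_surjective hle))

variable [IsLocalRing A] [IsNoetherianRing A] [Module.Finite A M]

lemma exists_mem_associatedPrimes_quotSMulTop_gt {y : A} (hym : y ∈ maximalIdeal A)
    (hy : IsSMulRegular M y) {P : Ideal A} (hP : P ∈ associatedPrimes A M) :
    ∃ Q ∈ associatedPrimes A (QuotSMulTop y M), P < Q := by
  let U : Submodule A M := Submodule.torsionBySet A M P
  have hU (m : M) : m ∈ U ↔ ∀ a ∈ P, a • m = 0 := by simp [U, Submodule.mem_torsionBySet_iff]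
  have hU_ne_bot : U ≠ ⊥ := by
    obtain ⟨hprime, m, hm⟩ := isAssociatedPrime_iff.mp hP
    refine fun hbot ↦ hprime.ne_top ((Ideal.eq_top_iff_one P).mpr ?_)
    have hmU : m ∈ U := (hU m).mpr fun a ha ↦ by simpa [hm, Submodule.mem_colon_singleton] using ha
    rw [hbot, Submodule.mem_bot] at hmU
    simp [hm, hmU, Submodule.mem_colon_singleton]
  have hU_not_le : ¬ U ≤ y • (⊤ : Submodule A M) := by
    refine fun hle ↦ hU_ne_bot (Submodule.eq_bot_of_le_smul_of_le_jacobson_bot (maximalIdeal A) U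
      (IsNoetherian.noetherian U) (fun u hu ↦ ?_) (maximalIdeal_le_jacobson _))
    obtain ⟨m, -, rfl⟩ := Submodule.mem_smul_pointwise_iff_exists _ _ _ |>.mp (hle hu)
    refine Submodule.smul_mem_smul hym ((hU m).mpr fun a ha ↦ ?_)
    exact hy.right_eq_zero_of_smul (by rw [smul_comm, (hU _).mp hu a ha])
  obtain ⟨u, huU, hu⟩ := SetLike.not_le_iff_exists.mp hU_not_le
  obtain ⟨Q, hQ, hle⟩ := exists_le_isAssociatedPrime_of_isNoetherianRing A
    (Submodule.Quotient.mk u : QuotSMulTop y M) (mt (Submodule.Quotient.mk_eq_zero _).mp hu)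
  have hQ_mem {a : A} (ha : a • u ∈ y • (⊤ : Submodule A M)) : a ∈ Q :=
    hle (Submodule.mem_colon_singleton.mpr ((Submodule.Quotient.mk_eq_zero _).mpr ha))
  refine ⟨Q, hQ, SetLike.lt_iff_le_and_exists.mpr ⟨fun a ha ↦ hQ_mem ?_, y, hQ_mem ?_,
    notMem_of_mem_associatedPrimes hy hP⟩⟩
  · rw [(hU u).mp huU a ha]
    exact zero_mem _
  · exact Submodule.smul_mem_pointwise_smul _ _ _ trivial

lemma length_le_ringKrullDim_quotient_of_mem_associatedPrimes {ys : List A}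
    (hym : ∀ y ∈ ys, y ∈ maximalIdeal A) (hy : IsWeaklyRegular M ys) {P : Ideal A}
    (hP : P ∈ associatedPrimes A M) : (ys.length : WithBot ℕ∞) ≤ ringKrullDim (A ⧸ P) := by
  induction ys generalizing M P with
  | nil =>
    have := Ideal.Quotient.nontrivial_iff.mpr hP.isPrime.ne_top
    simpa using ringKrullDim_nonneg_of_nontrivial
  | cons y ys ih =>
    obtain ⟨hy, hys⟩ := (isWeaklyRegular_cons_iff M y ys).mp hy
    obtain ⟨hym, hysm⟩ := List.forall_mem_cons.mp hym
    obtain ⟨Q, hQ, hlt⟩ := exists_mem_associatedPrimes_quotSMulTop_gt hym hy hP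
    have := hP.isPrime
    rw [List.length_cons]
    push_cast
    exact (add_le_add_left (ih hysm hys hQ) 1).trans (ringKrullDim_quotient_add_one_le_of_lt hlt)

omit [IsLocalRing A] [IsNoetherianRing A] in
lemma isWeaklyRegular_quotient_bot_iff {xs : List A} :
    IsWeaklyRegular (A ⧸ (⊥ : Ideal A)) xs ↔ IsWeaklyRegular A xs :=
  (Submodule.quotEquivOfEqBot _ rfl).isWeaklyRegular_congr xs

omit [IsNoetherianRing A] in
lemma exists_isWeaklyRegular_length_eq_ringKrullDim [FiniteRingKrullDim A]
    (hCM : IsCMLocalRing A) : ∃ ys : List A, (∀ y ∈ ys, y ∈ maximalIdeal A) ∧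
      IsWeaklyRegular A ys ∧ (ys.length : WithBot ℕ∞) = ringKrullDim A := by
  have : Nontrivial (A ⧸ (⊥ : Ideal A)) := Ideal.Quotient.nontrivial_iff.mpr bot_ne_top
  have hdepth : (qDepth A (⊥ : Ideal A) : WithBot ℕ∞) < ⊤ := hCM ▸ ringKrullDim_lt_top
  have hne : Nonempty {n : ℕ∞ | ∃ rs : List A, (∀ x ∈ rs, x ∈ maximalIdeal A) ∧
      IsRegular (A ⧸ (⊥ : Ideal A)) rs ∧ (rs.length : ℕ∞) = n} :=
    ⟨⟨0, [], by simp, IsRegular.nil _ _, by simp⟩⟩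
  obtain ⟨ys, hym, hreg, hlen⟩ := ENat.sSup_mem_of_nonempty_of_lt_top (WithBot.coe_lt_coe.mp hdepth)
  refine ⟨ys, hym, ?_, ?_⟩
  · exact isWeaklyRegular_quotient_bot_iff.mp hreg.toIsWeaklyRegular
  · rw [← rDim, hCM, qDepth, mDepth, ← hlen]
    rfl

lemma isWeaklyRegular_ring_cons_iff {x : A} {xs : List A} (hx : x ∈ maximalIdeal A)
    (hxs : ∀ y ∈ xs, y ∈ maximalIdeal A) :
    IsWeaklyRegular A (x :: xs) ↔
      IsWeaklyRegular A xs ∧ IsSMulRegular (A ⧸ Ideal.ofList xs) x := by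
  rw [isWeaklyRegular_cons_iff_isSMulRegular_quotient hx hxs, smul_eq_mul, Ideal.mul_top]

lemma ringKrullDim_le_of_mem_associatedPrimes (hCM : IsCMLocalRing A) {xs : List A}
    (hxm : ∀ x ∈ xs, x ∈ maximalIdeal A) (hx : IsWeaklyRegular A xs) {P : Ideal A}
    (hP : P ∈ associatedPrimes A (A ⧸ Ideal.ofList xs)) :
    ringKrullDim A ≤ ringKrullDim (A ⧸ P) + xs.length := by
  obtain ⟨ys, hym, hy, hlen⟩ := exists_isWeaklyRegular_length_eq_ringKrullDim hCM
  have hle : xs.length ≤ ys.length := by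
    have hdim := ringKrullDim_add_length_eq_ringKrullDim_of_isRegular xs
      ((IsLocalRing.isRegular_iff_isWeaklyRegular_of_subset_maximalIdeal hxm).mpr hx)
    have hnonneg : 0 ≤ ringKrullDim (A ⧸ Ideal.ofList xs) := by
      have hne_top : Ideal.ofList xs ≠ ⊤ :=
        ne_top_of_le_ne_top (maximalIdeal.isMaximal A).ne_top (Ideal.span_le.mpr hxm)
      have := Ideal.Quotient.nontrivial_iff.mpr hne_top
      exact ringKrullDim_nonneg_of_nontrivial
    rw [← hlen] at hdim
    exact_mod_cast (le_add_of_nonneg_left hnonneg).trans hdim.le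
  obtain ⟨zs, hzm, hzlen, hz⟩ := exists_isWeaklyRegular_append hle hxm hym hx hy
  have hz_quot : IsWeaklyRegular (A ⧸ Ideal.ofList xs) zs := by
    have hperm := isWeaklyRegular_of_perm_of_subset_maximalIdeal hz List.perm_append_comm
      (by simpa [or_imp, forall_and] using ⟨hzm, hxm⟩)
    rw [isWeaklyRegular_append_iff, smul_eq_mul, Ideal.mul_top] at hperm
    exact hperm.2
  rw [← hlen, ← hzlen]
  push_cast
  gcongr
  exact length_le_ringKrullDim_quotient_of_mem_associatedPrimes hzm hz_quot hP

theorem isWeaklyRegular_of_ringKrullDim_quotient_add_length_le (hCM : IsCMLocalRing A)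
    {xs : List A} (hxm : ∀ x ∈ xs, x ∈ maximalIdeal A)
    (hdim : ringKrullDim (A ⧸ Ideal.ofList xs) + xs.length ≤ ringKrullDim A) :
    IsWeaklyRegular A xs := by
  induction xs with
  | nil => exact .nil A A
  | cons x xs ih =>
    obtain ⟨hxm, hxsm⟩ := List.forall_mem_cons.mp hxm
    have hdim_le : ringKrullDim (A ⧸ Ideal.ofList xs) ≤
        ringKrullDim (A ⧸ Ideal.ofList (x :: xs)) + 1 := by
      have e := Submodule.quotOfListConsSMulTopEquivQuotSMulTopOuter A x xs
      rw [smul_eq_mul, smul_eq_mul, Ideal.mul_top, Ideal.mul_top] at e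
      rw [← Module.supportDim_quotient_eq_ringKrullDim,
        ← Module.supportDim_quotient_eq_ringKrullDim,
        Module.supportDim_eq_of_equiv e]
      exact Module.supportDim_le_supportDim_quotSMulTop_succ hxm
    have hxs : IsWeaklyRegular A xs := ih hxsm <| by
      refine le_trans (add_le_add_left hdim_le _) (le_trans (le_of_eq ?_) hdim)
      rw [List.length_cons]
      push_cast
      ring
    refine (isWeaklyRegular_ring_cons_iff hxm hxsm).mpr ⟨hxs,
      isSMulRegular_of_forall_notMem_associatedPrimes fun P hP hxP ↦ ?_⟩
    have hPle : Ideal.ofList (x :: xs) ≤ P := by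
      rw [Ideal.ofList_cons, sup_le_iff, Ideal.span_singleton_le_iff_mem]
      have hann := hP.annihilator_le
      rw [Submodule.annihilator_top, Ideal.annihilator_quotient] at hann
      exact ⟨hxP, hann⟩
    have hdim_P : ringKrullDim (A ⧸ P) ≤ ringKrullDim (A ⧸ Ideal.ofList (x :: xs)) :=
      ringKrullDim_le_of_surjective _ (Ideal.Quotient.factor_surjective hPle)
    have hdim_A := (ringKrullDim_le_of_mem_associatedPrimes hCM hxsm hxs hP).trans
      (add_le_add_left hdim_P _)
    obtain ⟨ys, -, -, hlen⟩ := exists_isWeaklyRegular_length_eq_ringKrullDim hCM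
    rw [← hlen] at hdim hdim_A
    rw [List.length_cons, Nat.cast_add, Nat.cast_one, ← add_assoc] at hdim
    exact ((add_le_add_left hdim_A 1).trans hdim).not_gt (by exact_mod_cast ys.length.lt_succ_self)

end CohenMacaulay

section Reduction

variable {A : Type u} [CommRing A] {I J J' : Ideal A}

lemma height_radical (I : Ideal A) : I.radical.height = I.height := by
  rw [Ideal.height_eq_inf_minimalPrimes, Ideal.radical_minimalPrimes,
    ← Ideal.height_eq_inf_minimalPrimes]

lemma pow_add_eq_pow_mul_of_pow_succ_eq {r : ℕ} (h : I ^ (r + 1) = J * I ^ r) (d : ℕ) :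
    I ^ (r + d) = J ^ d * I ^ r := by
  induction d with
  | zero => simp
  | succ d ih => rw [← add_assoc, pow_succ, ih, mul_assoc, ← pow_succ, h, pow_succ, mul_assoc]

namespace IsReduction

lemma exists_forall_pow_succ_eq (h : IsReduction J I) :
    ∃ r, ∀ n ≥ r, I ^ (n + 1) = J * I ^ n := by
  obtain ⟨r, hr⟩ := h.2
  refine ⟨r, fun n hn ↦ ?_⟩
  obtain ⟨d, rfl⟩ := Nat.exists_eq_add_of_le hn
  rw [add_right_comm, pow_add, hr, pow_add, mul_assoc]

lemma exists_pow_le (h : IsReduction J I) : ∃ n, I ^ n ≤ J := by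
  obtain ⟨r, hr⟩ := h.2
  exact ⟨r + 1, hr.trans_le Ideal.mul_le_left⟩

lemma le_of_isPrime {P : Ideal A} (h : IsReduction J I) (hP : P.IsPrime) (hJP : J ≤ P) : I ≤ P := by
  obtain ⟨n, hn⟩ := h.exists_pow_le
  exact hP.le_of_pow_le (hn.trans hJP)

lemma radical_eq (h : IsReduction J I) : J.radical = I.radical := by
  obtain ⟨n, hn⟩ := h.exists_pow_le
  exact (Ideal.radical_mono h.1).antisymm fun x ⟨k, hk⟩ ↦
    ⟨k * n, pow_mul x k n ▸ hn (Ideal.pow_mem_pow hk n)⟩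

lemma minimalPrimes_eq (h : IsReduction J I) : J.minimalPrimes = I.minimalPrimes := by
  rw [← Ideal.radical_minimalPrimes, h.radical_eq, Ideal.radical_minimalPrimes]

lemma height_eq (h : IsReduction J I) : J.height = I.height := by
  rw [← height_radical, h.radical_eq, height_radical]

lemma map {B : Type v} [CommRing B] (f : A →+* B) (h : IsReduction J I) :
    IsReduction (J.map f) (I.map f) := by
  obtain ⟨r, hr⟩ := h.2
  refine ⟨Ideal.map_mono h.1, r, ?_⟩
  rw [← Ideal.map_pow, ← Ideal.map_pow, ← Ideal.map_mul, hr]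

end IsReduction

lemma isReduction_refl (I : Ideal A) : IsReduction I I := ⟨le_rfl, 0, pow_succ' I 0⟩

lemma isReduction_of_pow_le (hJ : J ≤ I) {r : ℕ} (h : I ^ (r + 1) ≤ J * I ^ r) :
    IsReduction J I :=
  ⟨hJ, r, h.antisymm (by rw [pow_succ']; exact Ideal.mul_mono_left hJ)⟩

lemma isReduction_of_pow_le_sup [IsLocalRing A] [IsNoetherianRing A] (hJ : J ≤ I) {r : ℕ}
    (h : I ^ (r + 1) ≤ J * I ^ r ⊔ maximalIdeal A * I ^ (r + 1)) : IsReduction J I :=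
  isReduction_of_pow_le hJ <| Submodule.le_of_le_smul_of_le_jacobson_bot
    (IsNoetherian.noetherian _) (maximalIdeal_le_jacobson _) h

lemma IsReduction.of_le_sup [IsLocalRing A] [IsNoetherianRing A] (hJ : J ≤ I)
    (h : IsReduction J' I) (hle : J' ≤ J ⊔ maximalIdeal A * I) : IsReduction J I := by
  obtain ⟨r, hr⟩ := h.2
  refine isReduction_of_pow_le_sup (r := r) hJ ?_
  calc I ^ (r + 1) = J' * I ^ r := hr
    _ ≤ (J ⊔ maximalIdeal A * I) * I ^ r := Ideal.mul_mono_left hle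
    _ = J * I ^ r ⊔ maximalIdeal A * I ^ (r + 1) := by rw [Ideal.sup_mul, mul_assoc, pow_succ']

end Reduction

section FiberRing

variable {A : Type u} [CommRing A]

section Avoidance

variable [IsLocalRing A]

lemma exists_infinite_pairwise_isUnit_sub [Infinite (ResidueField A)] :
    ∃ U : Set A, U.Infinite ∧ U.Pairwise fun u v ↦ IsUnit (u - v) := by
  set lift : ResidueField A → A := Function.surjInv residue_surjective
  have hlift : ∀ c, residue A (lift c) = c := Function.surjInv_eq residue_surjective
  refine ⟨Set.range lift, Set.infinite_range_of_injective (Function.LeftInverse.injective hlift),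
    ?_⟩
  rintro - ⟨c, rfl⟩ - ⟨d, rfl⟩ hcd
  rw [← residue_ne_zero_iff_isUnit, map_sub, hlift, hlift, sub_ne_zero]
  exact fun h ↦ hcd (congrArg lift h)

lemma exists_mem_forall_notMem_of_not_le [Infinite (ResidueField A)] {M : Type v} [AddCommGroup M]
    [Module A M] (N : Submodule A M) {s : Set (Submodule A M)} (hs : s.Finite)
    (h : ∀ P ∈ s, ¬N ≤ P) : ∃ x ∈ N, ∀ P ∈ s, x ∉ P := by
  induction s, hs using Set.Finite.induction_on with
  | empty => exact ⟨0, N.zero_mem, by simp⟩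
  | @insert P s _ hs ih =>
    obtain ⟨x, hxN, hx⟩ := ih fun Q hQ ↦ h Q (Set.mem_insert_of_mem _ hQ)
    by_cases hxP : x ∈ P
    swap
    · exact ⟨x, hxN, by simpa [hxP] using hx⟩
    obtain ⟨y, hyN, hyP⟩ := SetLike.not_le_iff_exists.mp (h P (Set.mem_insert _ _))
    obtain ⟨U, hU, hsub⟩ := exists_infinite_pairwise_isUnit_sub (A := A)
    have hbad : (⋃ Q ∈ s, {u ∈ U | y + u • x ∈ Q}).Finite := by
      refine hs.biUnion fun Q hQ ↦ Set.Subsingleton.finite fun u hu v hv ↦ ?_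
      by_contra huv
      refine hx Q hQ ((Submodule.smul_mem_iff_of_isUnit Q (hsub hu.1 hv.1 huv)).mp ?_)
      simpa [Units.smul_def, sub_smul] using Q.sub_mem hu.2 hv.2
    obtain ⟨u, huU, hu⟩ := (hU.sdiff hbad).nonempty
    refine ⟨y + u • x, N.add_mem hyN (N.smul_mem u hxN), ?_⟩
    rintro Q (rfl | hQ) hmem
    · exact hyP ((Submodule.add_mem_iff_left _ (Q.smul_mem u hxP)).mp hmem)
    · exact hu (Set.mem_biUnion hQ ⟨huU, hmem⟩)

variable [Infinite (ResidueField A)] {S : Type v} [CommRing S] [IsNoetherianRing S] [Algebra A S]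

lemma exists_fun_forall_le_height (N : Submodule A S) (i : ℕ) :
    ∃ x : Fin i → S, (∀ j, x j ∈ N) ∧ ∀ P : Ideal S, P.IsPrime → (∀ j, x j ∈ P) →
      ¬N ≤ P.restrictScalars A → (i : ℕ∞) ≤ P.height := by
  induction i with
  | zero => exact ⟨Fin.elim0, by simp⟩
  | succ i ih =>
    obtain ⟨x, hxN, hx⟩ := ih
    obtain ⟨y, hyN, hy⟩ := exists_mem_forall_notMem_of_not_le N
      (s := Submodule.restrictScalars A ''
        {Q ∈ (Ideal.span (Set.range x)).minimalPrimes | ¬N ≤ Q.restrictScalars A})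
      (((Ideal.finite_minimalPrimes_of_isNoetherianRing S _).sep _).image _)
      (by rintro - ⟨Q, hQ, rfl⟩; exact hQ.2)
    refine ⟨Fin.cons y x, fun j ↦ Fin.cases hyN hxN j, fun P hP hmem hNP ↦ ?_⟩
    have hspan : Ideal.span (Set.range x) ≤ P := by
      rw [Ideal.span_le, Set.range_subset_iff]
      exact fun j ↦ hmem j.succ
    obtain ⟨Q, hQ, hQP⟩ := Ideal.exists_minimalPrimes_le hspan
    have := hQ.1.1
    have hNQ : ¬N ≤ Q.restrictScalars A := fun h ↦ hNP fun z hz ↦ hQP (h hz)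
    have hyQ : y ∉ Q := hy _ ⟨Q, ⟨hQ, hNQ⟩, rfl⟩
    have hlt : Q < P := lt_of_le_of_ne hQP fun h ↦ hyQ (h ▸ hmem 0)
    have hxQ : ∀ j, x j ∈ Q := fun j ↦ hQ.1.2 (Ideal.subset_span ⟨j, rfl⟩)
    calc ((i + 1 : ℕ) : ℕ∞) = i + 1 := by norm_cast
      _ ≤ Q.height + 1 := by gcongr; exact hx Q this hxQ hNQ
      _ ≤ P.height := Ideal.height_add_one_le_of_lt_of_isPrime hlt

lemma exists_fun_pow_span_le_span [IsLocalRing S] {g : ℕ} (hg : ringKrullDim S ≤ g)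
    (N : Submodule A S) (hN : N ≤ (maximalIdeal S).restrictScalars A) :
    ∃ x : Fin g → S, (∀ j, x j ∈ N) ∧
      ∃ n, Ideal.span (N : Set S) ^ n ≤ Ideal.span (Set.range x) := by
  obtain ⟨x, hxN, hx⟩ := exists_fun_forall_le_height N g
  refine ⟨x, hxN, Ideal.exists_pow_le_of_le_radical_of_fg ?_ (IsNoetherian.noetherian _)⟩
  rw [Ideal.radical_eq_sInf]
  refine le_sInf fun P ⟨hP, hPprime⟩ ↦ ?_
  have hxP : ∀ j, x j ∈ P := fun j ↦ hP (Ideal.subset_span ⟨j, rfl⟩)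
  by_contra hNP
  replace hNP : ¬N ≤ P.restrictScalars A := fun h ↦ hNP (Ideal.span_le.mpr h)
  have hlt : P < maximalIdeal S :=
    lt_of_le_of_ne (le_maximalIdeal hPprime.ne_top) fun h ↦ hNP (h ▸ hN)
  have hheight : (g : ℕ∞) + 1 ≤ (maximalIdeal S).height :=
    (add_le_add_left (hx P hPprime hxP hNP) 1).trans
      (Ideal.height_add_one_le_of_lt_of_isPrime hlt)
  rw [← maximalIdeal_height_eq_ringKrullDim] at hg
  have : (g : ℕ∞) + 1 ≤ g := hheight.trans (by exact_mod_cast hg)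
  exact absurd this (by exact_mod_cast Nat.not_succ_le_self g)

lemma exists_fun_forall_exists_mul_mem_span {M : Ideal S} [M.IsPrime] {g : ℕ}
    (hg : M.height ≤ g) {N : Submodule A S} (hN : N ≤ M.restrictScalars A) :
    ∃ x : Fin g → S, (∀ j, x j ∈ N) ∧
      ∃ n, ∀ f ∈ Ideal.span (N : Set S) ^ n, ∃ s ∉ M, s * f ∈ Ideal.span (Set.range x) := by
  let loc : S →ₐ[A] Localization.AtPrime M := IsScalarTower.toAlgHom A S _
  have hspan (s : Set S) : Ideal.span (loc '' s) = (Ideal.span s).map (algebraMap S _) :=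
    (Ideal.map_span _ s).symm
  obtain ⟨y, hyN, n, hn⟩ := exists_fun_pow_span_le_span (S := Localization.AtPrime M) (g := g)
    (by rw [IsLocalization.AtPrime.ringKrullDim_eq_height M]; exact_mod_cast hg)
    (N.map loc.toLinearMap) (by
      rintro - ⟨x, hx, rfl⟩
      exact (IsLocalization.AtPrime.to_map_mem_maximal_iff _ M x).mpr (hN hx))
  choose x hxN hxy using hyN
  refine ⟨x, hxN, n, fun f hf ↦
    (IsLocalization.algebraMap_mem_map_algebraMap_iff M.primeCompl (Localization.AtPrime M) _ _).mp
      ?_⟩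
  obtain rfl : loc ∘ x = y := funext hxy
  rw [← hspan, ← Set.range_comp]
  refine hn ?_
  rw [Submodule.map_coe, AlgHom.coe_toLinearMap, hspan, ← Ideal.map_pow]
  exact Ideal.mem_map_of_mem _ hf

end Avoidance

section Rees

variable {I J : Ideal A}

/-- The inclusion `x ↦ xT` of an ideal `I` in its Rees algebra `⨁ Iⁿ Tⁿ`. -/
noncomputable def reesDegreeOne (I : Ideal A) : I →ₗ[A] reesAlgebra I :=
  LinearMap.codRestrict (Subalgebra.toSubmodule (reesAlgebra I))
    (Polynomial.monomial 1 ∘ₗ Submodule.subtype I) fun x ↦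
      reesAlgebra.monomial_mem.mpr (by simp)

@[simp]
lemma coe_reesDegreeOne (x : I) : (reesDegreeOne I x : Polynomial A) = .monomial 1 (x : A) := rfl

lemma coeff_mem_of_mem_span {K : ℕ → Ideal A} (hK : ∀ i j, I ^ i * K j ≤ K (i + j))
    {s : Set (reesAlgebra I)} (hs : ∀ f ∈ s, ∀ n, (f : Polynomial A).coeff n ∈ K n)
    {f : reesAlgebra I} (hf : f ∈ Ideal.span s) (n : ℕ) : (f : Polynomial A).coeff n ∈ K n := by
  induction hf using Submodule.span_induction generalizing n with
  | mem f hf => exact hs f hf n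
  | zero => simp
  | add f g _ _ hf hg => simpa using (K n).add_mem (hf n) (hg n)
  | smul a f _ hf =>
    rw [smul_eq_mul, Subalgebra.coe_mul, Polynomial.coeff_mul]
    refine sum_mem fun ij hij ↦ ?_
    rw [← Finset.HasAntidiagonal.mem_antidiagonal.mp hij]
    exact hK _ _ (Ideal.mul_mem_mul (a.2 ij.1) (hf ij.2))

lemma exists_coe_eq_monomial_mem_pow (hJI : J ≤ I) {n : ℕ} {y : A} (hy : y ∈ J ^ n) :
    ∃ f : reesAlgebra I, (f : Polynomial A) = .monomial n y ∧
      f ∈ Ideal.span (reesDegreeOne I '' {x | (x : A) ∈ J}) ^ n := by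
  induction n generalizing y with
  | zero => exact ⟨algebraMap A _ y, rfl, by simp⟩
  | succ n ih =>
    rw [pow_succ] at hy
    induction hy using Submodule.mul_induction_on' with
    | mem_mul_mem y hy x hx =>
      obtain ⟨f, hf, hfmem⟩ := ih hy
      refine ⟨f * reesDegreeOne I ⟨x, hJI hx⟩, by simp [hf, Polynomial.monomial_mul_monomial], ?_⟩
      rw [pow_succ]
      exact Ideal.mul_mem_mul hfmem (Ideal.subset_span ⟨_, hx, rfl⟩)
    | add y _ z _ hy hz =>
      obtain ⟨f, hf, hfmem⟩ := hy
      obtain ⟨f', hf', hfmem'⟩ := hz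
      exact ⟨f + f', by simp [hf, hf'], Ideal.add_mem _ hfmem hfmem'⟩

end Rees

section Local

variable [IsLocalRing A] {I J : Ideal A}

/-- The homogeneous maximal ideal `𝔪 ⊕ I T ⊕ I² T² ⊕ ⋯` of the Rees algebra of `I`. -/
noncomputable def reesMaximalIdeal (I : Ideal A) : Ideal (reesAlgebra I) :=
  (maximalIdeal A).comap (Polynomial.constantCoeff.comp (reesAlgebra I).val.toRingHom)

lemma mem_reesMaximalIdeal {f : reesAlgebra I} :
    f ∈ reesMaximalIdeal I ↔ (f : Polynomial A).coeff 0 ∈ maximalIdeal A := Iff.rfl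

instance : (reesMaximalIdeal I).IsPrime := inferInstanceAs (Ideal.comap _ _).IsPrime

lemma coeff_mem_of_mem_span_sup {ι : Type*} {a : ι → I} {f : reesAlgebra I}
    (hf : f ∈ Ideal.span (Set.range (reesDegreeOne I ∘ a)) ⊔
      (maximalIdeal A).map (algebraMap A (reesAlgebra I))) (n : ℕ) :
    (f : Polynomial A).coeff (n + 1) ∈
      Ideal.span (Set.range fun j ↦ (a j : A)) * I ^ n ⊔ maximalIdeal A * I ^ (n + 1) := by
  rw [Ideal.map, ← Ideal.span_union] at hf
  refine coeff_mem_of_mem_span (fun i j ↦ ?_) ?_ hf (n + 1)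
    (K := fun n ↦ Ideal.span (Set.range fun j ↦ (a j : A)) * I ^ (n - 1) ⊔ maximalIdeal A * I ^ n)
  · rw [Ideal.mul_sup, mul_left_comm, ← pow_add, mul_left_comm, ← pow_add]
    exact sup_le_sup_right (Ideal.mul_mono_right (Ideal.pow_le_pow_right (by omega))) _
  · rintro f (⟨j, rfl⟩ | ⟨c, hc, rfl⟩) n
    · rw [Function.comp_apply, coe_reesDegreeOne, Polynomial.coeff_monomial]
      split_ifs with h
      · subst h
        exact Ideal.mem_sup_left (by simpa using Ideal.subset_span (Set.mem_range_self j))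
      · exact Ideal.zero_mem _
    · change (Polynomial.C c).coeff n ∈ _
      rw [Polynomial.coeff_C]
      split_ifs with h
      · subst h
        exact Ideal.mem_sup_right (by simpa using hc)
      · exact Ideal.zero_mem _

variable [Infinite (ResidueField A)]

lemma exists_fun_pow_le_span_mul_sup_of_surjective {F : Type*} [CommRing F] [IsNoetherianRing F]
    {π : reesAlgebra I →+* F} (hπ : Function.Surjective π)
    (hker : RingHom.ker π = (maximalIdeal A).map (algebraMap A (reesAlgebra I)))
    {g : ℕ} (hg : ringKrullDim F ≤ g) (hJI : J ≤ I) :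
    ∃ a : Fin g → A, (∀ j, a j ∈ J) ∧ ∃ n,
      J ^ (n + 1) ≤ Ideal.span (Set.range a) * I ^ n ⊔ maximalIdeal A * I ^ (n + 1) := by
  have hmax : RingHom.ker π ≤ reesMaximalIdeal I := by
    rw [hker, Ideal.map_le_iff_le_comap]
    exact fun c hc ↦ mem_reesMaximalIdeal.mpr (by simpa using hc)
  set M : Ideal F := (reesMaximalIdeal I).map π
  have hM : M.IsPrime := Ideal.map_isPrime_of_surjective hπ hmax
  have hMg : M.height ≤ g := by
    exact_mod_cast (Ideal.height_le_ringKrullDim_of_ne_top hM.ne_top).trans hg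
  algebraize [π.comp (algebraMap A (reesAlgebra I))]
  let π' : reesAlgebra I →ₐ[A] F := { π with commutes' := fun _ ↦ rfl }
  let N : Submodule A (reesAlgebra I) := (Submodule.comap I.subtype J).map (reesDegreeOne I)
  have hNM : N.map π'.toLinearMap ≤ M.restrictScalars A := by
    rintro - ⟨-, ⟨x, -, rfl⟩, rfl⟩
    exact Ideal.mem_map_of_mem π (mem_reesMaximalIdeal.mpr (by simp))
  obtain ⟨y, hyN, n, hn⟩ := exists_fun_forall_exists_mul_mem_span hMg hNM
  choose z hz hzy using hyN
  choose a ha haz using hz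
  refine ⟨fun j ↦ a j, ha, n, fun x hx ↦ ?_⟩
  obtain ⟨f, hf, hfJ⟩ := exists_coe_eq_monomial_mem_pow hJI hx
  obtain ⟨s', hs', hsf⟩ := hn (π f) (by
    rw [Submodule.map_coe, AlgHom.coe_toLinearMap, ← AlgHom.coe_toRingHom, ← Ideal.map_span,
      ← Ideal.map_pow]
    exact Ideal.mem_map_of_mem _ (Ideal.pow_le_pow_right n.le_succ hfJ))
  obtain ⟨s, rfl⟩ := hπ s'
  obtain rfl : π ∘ reesDegreeOne I ∘ a = y := funext fun j ↦ by rw [← hzy, ← haz]; rfl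
  have hmem := coeff_mem_of_mem_span_sup (I := I) (a := a) (f := s * f) (n := n) (by
    rw [← hker, ← Ideal.comap_map_of_surjective' π hπ, Ideal.mem_comap, map_mul, Ideal.map_span,
      ← Set.range_comp]
    exact hsf)
  have hcoeff : ((s * f : reesAlgebra I) : Polynomial A).coeff (n + 1) =
      (s : Polynomial A).coeff 0 * x := by
    simpa [hf] using Polynomial.coeff_mul_monomial (s : Polynomial A) (n + 1) 0 x
  rw [hcoeff] at hmem
  have hs : s ∉ reesMaximalIdeal I := fun h ↦ hs' (Ideal.mem_map_of_mem π h)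
  exact (Ideal.unit_mul_mem_iff_mem _ (notMem_maximalIdeal.mp hs)).mp hmem

lemma exists_fun_pow_le_span_mul_sup [IsNoetherianRing A] {g : ℕ} (hg : fiberDim I ≤ g)
    (hJI : J ≤ I) :
    ∃ a : Fin g → A, (∀ j, a j ∈ J) ∧ ∃ n,
      J ^ (n + 1) ≤ Ideal.span (Set.range a) * I ^ n ⊔ maximalIdeal A * I ^ (n + 1) := by
  let K := (maximalIdeal A).map (algebraMap A (reesAlgebra I))
  have hquot := exists_fun_pow_le_span_mul_sup_of_surjective (F := reesAlgebra I ⧸ K)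
    (π := Ideal.Quotient.mk K) (J := J) (g := g) Ideal.Quotient.mk_surjective
  exact hquot Ideal.mk_ker hg hJI

lemma IsReduction.exists_fun_of_fiberDim_le [IsNoetherianRing A] {g : ℕ} (hg : fiberDim I ≤ g)
    (h : IsReduction J I) :
    ∃ a : Fin g → A, Ideal.span (Set.range a) ≤ J ∧ IsReduction (Ideal.span (Set.range a)) I := by
  obtain ⟨a, ha, n, hn⟩ := exists_fun_pow_le_span_mul_sup hg h.1
  have haJ : Ideal.span (Set.range a) ≤ J := Ideal.span_le.mpr (Set.range_subset_iff.mpr ha)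
  obtain ⟨r, hr⟩ := h.2
  refine ⟨a, haJ, isReduction_of_pow_le_sup (haJ.trans h.1) (r := n + r) ?_⟩
  calc I ^ (n + r + 1) = J ^ (n + 1) * I ^ r := by
        rw [← pow_add_eq_pow_mul_of_pow_succ_eq hr]; congr 1; ring
    _ ≤ (Ideal.span (Set.range a) * I ^ n ⊔ maximalIdeal A * I ^ (n + 1)) * I ^ r :=
        Ideal.mul_mono_left hn
    _ = _ := by
        rw [Ideal.sup_mul, mul_assoc, mul_assoc, ← pow_add, ← pow_add, add_right_comm n 1]

end Local

end FiberRing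

section Openness

variable {A : Type u} [CommRing A] {I : Ideal A}

lemma exists_sum_eq_of_mem_mul_span_range {ι : Type*} [Fintype ι] {a : ι → A} {N : Ideal A} {x : A}
    (hx : x ∈ N * Ideal.span (Set.range a)) : ∃ y : ι → A, (∀ i, y i ∈ N) ∧ ∑ i, y i * a i = x := by
  obtain ⟨y, hy, rfl⟩ := (Submodule.mem_ideal_smul_span_iff_exists_sum N a x).mp hx
  exact ⟨y, hy, (y.sum_fintype (fun i c ↦ c • a i) fun _ ↦ zero_smul _ _).symm⟩

lemma mem_of_isUnit_det_of_mulVec_mem {κ : Type*} [Fintype κ] [DecidableEq κ] {N : Matrix κ κ A}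
    (hN : IsUnit N.det) {e : κ → A} {L : Ideal A} (h : ∀ k, N.mulVec e k ∈ L) (k : κ) :
    e k ∈ L := by
  have he : N⁻¹.mulVec (N.mulVec e) = e := by
    rw [Matrix.mulVec_mulVec, Matrix.nonsing_inv_mul N hN, Matrix.one_mulVec]
  rw [← he]
  exact sum_mem fun l _ ↦ L.mul_mem_left _ (h l)

variable {S : Type v} [CommRing S] [Algebra A S]

lemma sub_algebraMap_mem_ker_mul_map (ε : S →ₐ[A] A) {x : S} (hx : x ∈ I.map (algebraMap A S)) :
    x - algebraMap A S (ε x) ∈ RingHom.ker ε * I.map (algebraMap A S) := by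
  have hmap : I.map (algebraMap A S) ≤ I.comap ε.toRingHom :=
    Ideal.map_le_iff_le_comap.mpr fun a ha ↦ by simpa using ha
  have hker (s : S) : s - algebraMap A S (ε s) ∈ RingHom.ker ε := by simp [RingHom.mem_ker]
  induction hx using Submodule.span_induction with
  | mem x hx => obtain ⟨a, -, rfl⟩ := hx; simp
  | zero => simp
  | add x y _ _ hx hy => simpa [add_sub_add_comm] using Ideal.add_mem _ hx hy
  | smul s x hx ih =>
    have hεx : algebraMap A S (ε x) ∈ I.map (algebraMap A S) := Ideal.mem_map_of_mem _ (hmap hx)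
    have : s • x - algebraMap A S (ε (s • x)) = s * (x - algebraMap A S (ε x)) +
        (s - algebraMap A S (ε s)) * algebraMap A S (ε x) := by
      simp only [smul_eq_mul, map_mul]; ring
    rw [this]
    exact Ideal.add_mem _ (Ideal.mul_mem_left _ _ ih) (Ideal.mul_mem_mul (hker s) hεx)

lemma exists_matrix_mulVec_eq {ι κ : Type*} [Fintype ι] [Fintype κ] [DecidableEq κ] {b : ι → S}
    (hb : ∀ i, b i ∈ I.map (algebraMap A S)) (ε₀ : S →ₐ[A] A) {n : ℕ} {e : κ → A}
    (he : Ideal.span (Set.range e) = I ^ (n + 1)) {y : κ → ι → A} (hy : ∀ k i, y k i ∈ I ^ n)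
    (hye : ∀ k, ∑ i, y k i * ε₀ (b i) = e k) :
    ∃ N : Matrix κ κ S, ε₀.mapMatrix N = 1 ∧
      ∀ k, N.mulVec (algebraMap A S ∘ e) k = ∑ i, algebraMap A S (y k i) * b i := by
  have hmap : (I ^ (n + 1)).map (algebraMap A S) = Ideal.span (Set.range (algebraMap A S ∘ e)) := by
    rw [← he, Set.range_comp]
    exact Ideal.map_span _ _
  have hmem (k) : ∑ i, algebraMap A S (y k i) * (b i - algebraMap A S (ε₀ (b i))) ∈
      RingHom.ker ε₀ * Ideal.span (Set.range (algebraMap A S ∘ e)) := by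
    rw [← hmap, Ideal.map_pow, pow_succ, mul_left_comm, ← Ideal.map_pow]
    exact sum_mem fun i _ ↦ Ideal.mul_mem_mul (Ideal.mem_map_of_mem _ (hy k i))
      (sub_algebraMap_mem_ker_mul_map ε₀ (hb i))
  choose N hN hNe using fun k ↦ exists_sum_eq_of_mem_mul_span_range (hmem k)
  refine ⟨1 + Matrix.of N, ?_, fun k ↦ ?_⟩
  · rw [map_add, map_one, add_eq_left]
    ext k l
    exact hN k l
  · have hek : algebraMap A S (e k) = ∑ i, algebraMap A S (y k i) * algebraMap A S (ε₀ (b i)) := by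
      simp only [← hye k, map_sum, map_mul]
    have hNk : (Matrix.of N).mulVec (algebraMap A S ∘ e) k = _ := hNe k
    simp only [Matrix.add_mulVec, Matrix.one_mulVec, Pi.add_apply, Function.comp_apply, hNk, hek,
      mul_sub, Finset.sum_sub_distrib, add_sub_cancel]

variable [IsNoetherianRing A]

/- Nakayama made explicit: the witness is the determinant of the matrix expressing the products
`b i * y k i` through generators of `I ^ (n + 1)`, which `ε₀` specialises to the identity. -/
lemma exists_forall_isUnit_pow_le {ι : Type*} [Finite ι] {b : ι → S}
    (hb : ∀ i, b i ∈ I.map (algebraMap A S)) (ε₀ : S →ₐ[A] A) {n : ℕ}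
    (hn : I ^ (n + 1) ≤ Ideal.span (Set.range (ε₀ ∘ b)) * I ^ n) :
    ∃ P : S, ε₀ P = 1 ∧ ∀ ε : S →ₐ[A] A, IsUnit (ε P) →
      I ^ (n + 1) ≤ Ideal.span (Set.range (ε ∘ b)) * I ^ n := by
  have := Fintype.ofFinite ι
  simp only [mul_comm _ (I ^ n)] at hn ⊢
  obtain ⟨κ, e, he⟩ := Submodule.fg_iff_exists_fin_generating_family.mp
    (IsNoetherian.noetherian (I ^ (n + 1)))
  have heI (k) : e k ∈ I ^ (n + 1) := he ▸ Submodule.subset_span ⟨k, rfl⟩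
  choose y hy hye using fun k ↦ exists_sum_eq_of_mem_mul_span_range (hn (heI k))
  obtain ⟨N, hN, hNe⟩ := exists_matrix_mulVec_eq hb ε₀ he hy hye
  refine ⟨N.det, by rw [AlgHom.map_det, hN, Matrix.det_one], fun ε hε ↦ ?_⟩
  rw [AlgHom.map_det] at hε
  rw [← he, Submodule.span_le, Set.range_subset_iff]
  refine mem_of_isUnit_det_of_mulVec_mem hε fun k ↦ ?_
  have hεk : (ε.mapMatrix N).mulVec e k = ∑ i, y k i * ε (b i) := by
    have := congrArg ε (hNe k)
    simpa only [Matrix.mulVec, dotProduct, map_sum, map_mul, Function.comp_apply,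
      AlgHom.mapMatrix_apply, Matrix.map_apply,
      AlgHom.commutes, Algebra.algebraMap_self, RingHom.id_apply] using this
  rw [hεk]
  exact sum_mem fun i _ ↦ Ideal.mul_mem_mul (hy k i) (Ideal.subset_span ⟨i, rfl⟩)

open Polynomial in
lemma IsReduction.exists_polynomial {ι : Type*} [Finite ι] {a δ : ι → A}
    (h : IsReduction (Ideal.span (Set.range a)) I) (hδ : ∀ i, δ i ∈ I) :
    ∃ P : A[X], P.eval 0 = 1 ∧ ∀ u, IsUnit (P.eval u) →
      IsReduction (Ideal.span (Set.range fun i ↦ a i + u * δ i)) I := by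
  have ha (i) : a i ∈ I := h.1 (Ideal.subset_span ⟨i, rfl⟩)
  obtain ⟨n, hn⟩ := h.2
  have hb (i) : C (a i) + X * C (δ i) ∈ I.map (algebraMap A A[X]) :=
    add_mem (Ideal.mem_map_of_mem _ (ha i)) (Ideal.mul_mem_left _ _ (Ideal.mem_map_of_mem _ (hδ i)))
  have heval (u : A) : aeval u ∘ (fun i ↦ C (a i) + X * C (δ i)) = fun i ↦ a i + u * δ i := by
    ext i
    simp only [Function.comp_apply, map_add, map_mul, aeval_X, aeval_C, Algebra.algebraMap_self,
      RingHom.id_apply]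
  obtain ⟨P, hP₀, hP⟩ := exists_forall_isUnit_pow_le hb (aeval 0) (n := n) (by
    simpa only [heval, zero_mul, add_zero] using hn.le)
  refine ⟨P, by simpa using hP₀, fun u hu ↦ isReduction_of_pow_le ?_ (r := n) ?_⟩
  · rw [Ideal.span_le, Set.range_subset_iff]
    exact fun i ↦ add_mem (ha i) (I.mul_mem_left _ (hδ i))
  · simpa only [heval] using hP (aeval u) (by simpa using hu)

variable [IsLocalRing A]

omit [IsNoetherianRing A] in
open Polynomial in
lemma finite_setOf_not_isUnit_eval {P : A[X]} (hP : P.eval 0 = 1) {U : Set A}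
    (hU : U.Pairwise fun u v ↦ IsUnit (u - v)) : {u ∈ U | ¬IsUnit (P.eval u)}.Finite := by
  have hP₀ : P.map (residue A) ≠ 0 := fun h0 ↦ by
    have : (P.map (residue A)).eval (residue A 0) = 1 := by rw [eval_map_apply, hP, map_one]
    simp [h0] at this
  refine Set.Finite.of_finite_image (f := residue A)
    ((P.map (residue A)).rootSet_finite (ResidueField A) |>.subset ?_) fun u hu v hv huv ↦ ?_
  · rintro _ ⟨u, hu, rfl⟩
    simpa [mem_rootSet, hP₀, eval_map_apply, residue_eq_zero_iff] using hu.2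
  · by_contra hne
    exact (residue_ne_zero_iff_isUnit _).mpr (hU hu.1 hv.1 hne) (by rw [map_sub, huv, sub_self])

lemma IsReduction.finite_setOf_not_isReduction {ι : Type*} [Finite ι] {a δ : ι → A}
    (h : IsReduction (Ideal.span (Set.range a)) I) (hδ : ∀ i, δ i ∈ I) {U : Set A}
    (hU : U.Pairwise fun u v ↦ IsUnit (u - v)) :
    {u ∈ U | ¬IsReduction (Ideal.span (Set.range fun i ↦ a i + u * δ i)) I}.Finite := by
  obtain ⟨P, hP₀, hP⟩ := h.exists_polynomial hδ
  exact (finite_setOf_not_isUnit_eval hP₀ hU).subset fun u hu ↦ ⟨hu.1, mt (hP u) hu.2⟩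

omit [IsNoetherianRing A] [IsLocalRing A] in
lemma pow_succ_le_mul_pow_mono {J : Ideal A} {n m : ℕ} (hnm : n ≤ m)
    (h : I ^ (n + 1) ≤ J * I ^ n) : I ^ (m + 1) ≤ J * I ^ m := by
  obtain ⟨k, rfl⟩ := Nat.exists_eq_add_of_le hnm
  calc I ^ (n + k + 1) = I ^ (n + 1) * I ^ k := by rw [← pow_add, add_right_comm]
    _ ≤ J * I ^ n * I ^ k := Ideal.mul_mono_left h
    _ = J * I ^ (n + k) := by rw [mul_assoc, ← pow_add]

/- The tuples `a` whose span satisfies `I ^ (n + 1) ≤ (a) * I ^ n` form an open subset of the affine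
space of tuples over the residue field, and these subsets increase with `n`. -/
lemma exists_forall_isReduction_pow_le {ι : Type*} [Finite ι] (I : Ideal A) :
    ∃ N, ∀ a : ι → A, IsReduction (Ideal.span (Set.range a)) I →
      I ^ (N + 1) ≤ Ideal.span (Set.range a) * I ^ N := by
  obtain ⟨κ, f, hf⟩ := Submodule.fg_iff_exists_fin_generating_family.mp (IsNoetherian.noetherian I)
  have hfI (j) : f j ∈ I := hf ▸ Submodule.subset_span ⟨j, rfl⟩
  let b (i : ι) : MvPolynomial (ι × Fin κ) A := ∑ j, MvPolynomial.X (i, j) * MvPolynomial.C (f j)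
  let V (n : ℕ) : Set (MvPolynomial (ι × Fin κ) (ResidueField A)) :=
    {P | ∀ c, MvPolynomial.eval (residue A ∘ c) P ≠ 0 →
      I ^ (n + 1) ≤ Ideal.span (Set.range (MvPolynomial.aeval c ∘ b)) * I ^ n}
  have hV : Monotone V := fun n m hnm P hP c hc ↦ pow_succ_le_mul_pow_mono hnm (hP c hc)
  obtain ⟨N, hN⟩ := monotone_stabilizes_iff_noetherian.mpr inferInstance
    (⟨fun n ↦ Ideal.span (V n), fun n m hnm ↦ Ideal.span_mono (hV hnm)⟩ :
      ℕ →o Ideal (MvPolynomial (ι × Fin κ) (ResidueField A)))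
  refine ⟨N, fun a ha ↦ ?_⟩
  obtain ⟨c, rfl⟩ : ∃ c, MvPolynomial.aeval c ∘ b = a := by
    have haI (i) : a i ∈ Ideal.span (Set.range f) := by
      rw [Ideal.span, hf]; exact ha.1 (Ideal.subset_span ⟨i, rfl⟩)
    choose c hc using fun i ↦ Ideal.mem_span_range_iff_exists_fun.mp (haI i)
    exact ⟨fun p ↦ c p.1 p.2, by ext i; simp [b, hc]⟩
  obtain ⟨n, hn⟩ := ha.exists_forall_pow_succ_eq
  obtain ⟨P, hPc, hP⟩ := exists_forall_isUnit_pow_le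
    (fun i ↦ sum_mem fun j _ ↦ Ideal.mul_mem_left _ _ (Ideal.mem_map_of_mem _ (hfI j)))
    (MvPolynomial.aeval c) (hn (max n N) (le_max_left n N)).le
  have hPV : MvPolynomial.map (residue A) P ∈ Ideal.span (V N) := by
    rw [show Ideal.span (V N) = Ideal.span (V (max n N)) from hN _ (le_max_right n N)]
    refine Ideal.subset_span fun c' hc' ↦ hP _ ?_
    rwa [← MvPolynomial.map_eval, residue_ne_zero_iff_isUnit, ← MvPolynomial.aeval_eq_eval] at hc'
  by_contra hcon
  have hker : Ideal.span (V N) ≤ RingHom.ker (MvPolynomial.eval (residue A ∘ c)) :=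
    Ideal.span_le.mpr fun Q hQ ↦ by_contra fun hne ↦ hcon (hQ c hne)
  have : MvPolynomial.eval (residue A ∘ c) (MvPolynomial.map (residue A) P) = 0 := hker hPV
  rw [← MvPolynomial.map_eval, ← MvPolynomial.aeval_eq_eval] at this
  simp [hPc] at this

end Openness

section Equimultiple

variable {A : Type u} [CommRing A] [IsLocalRing A] {I J : Ideal A} {g : ℕ}

/-- A proper ideal whose analytic spread and height both equal `g`, recorded by the two nontrivial
inequalities only: `ht I ≤ ℓ(I)` holds for every proper ideal. -/
structure IsEquimultiple (I : Ideal A) (g : ℕ) : Prop where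
  le_maximalIdeal : I ≤ maximalIdeal A
  fiberDim_le : fiberDim I ≤ g
  le_height : g ≤ I.height

lemma exists_eq_natCast_of_nonneg_of_lt_top {d : WithBot ℕ∞} (hd₀ : 0 ≤ d) (hd : d < ⊤) :
    ∃ n : ℕ, d = n := by
  induction d with
  | bot => simp at hd₀
  | coe d =>
    lift d to ℕ using fun h ↦ hd.ne (by rw [h]; rfl)
    exact ⟨d, rfl⟩

lemma exists_mulVec_mem_span_sup_of_not_isUnit_det {ι : Type*} [Fintype ι] [DecidableEq ι]
    {M : Matrix ι ι A} (hM : ¬IsUnit M.det) {a : ι → A} (ha : ∀ i, a i ∈ I) :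
    ∃ i₀, M.mulVec a i₀ ∈
      Ideal.span (Set.range fun i : {i // i ≠ i₀} ↦ M.mulVec a i) ⊔ maximalIdeal A * I := by
  obtain ⟨v, hv, hvM⟩ : ∃ v ≠ 0, Matrix.vecMul v ((residue A).mapMatrix M) = 0 := by
    rwa [Matrix.exists_vecMul_eq_zero_iff, ← RingHom.map_det, residue_eq_zero_iff]
  obtain ⟨c, rfl⟩ := (residue_surjective (R := A)).comp_left v
  obtain ⟨i₀, hi₀⟩ := Function.ne_iff.mp hv
  have hcM (j) : Matrix.vecMul c M j ∈ maximalIdeal A := by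
    rw [← residue_eq_zero_iff, RingHom.map_vecMul]
    exact congrFun hvM j
  have hsum : ∑ i, c i * M.mulVec a i ∈ maximalIdeal A * I := by
    have : ∑ i, c i * M.mulVec a i = ∑ j, Matrix.vecMul c M j * a j :=
      Matrix.dotProduct_mulVec c M a
    exact this ▸ sum_mem fun j _ ↦ Ideal.mul_mem_mul (hcM j) (ha j)
  refine ⟨i₀, ?_⟩
  rw [← Ideal.unit_mul_mem_iff_mem _ ((residue_ne_zero_iff_isUnit (c i₀)).mp hi₀)]
  rw [← Finset.add_sum_erase _ _ (Finset.mem_univ i₀)] at hsum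
  refine (Ideal.add_mem_iff_left _ ?_).mp (Ideal.mem_sup_right hsum)
  exact sum_mem fun i hi ↦ Ideal.mem_sup_left <| Ideal.mul_mem_left _ _ <|
    Ideal.subset_span ⟨⟨i, Finset.ne_of_mem_erase hi⟩, rfl⟩

variable [IsNoetherianRing A]

lemma fiberDim_lt_top (I : Ideal A) : fiberDim I < ⊤ := by
  have : Algebra.FiniteType A (reesAlgebra I) :=
    (reesAlgebra I).fg_iff_finiteType.mp (reesAlgebra.fg (IsNoetherian.noetherian I))
  obtain ⟨n, f, hf⟩ := Algebra.FiniteType.iff_quotient_mvPolynomial''.mp this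
  have hle : fiberDim I ≤ ringKrullDim (MvPolynomial (Fin n) A) :=
    ringKrullDim_le_of_surjective ((Ideal.Quotient.mk
      ((maximalIdeal A).map (algebraMap A (reesAlgebra I)))).comp (f : _ →+* _))
      (Ideal.Quotient.mk_surjective.comp hf)
  refine hle.trans_lt ?_
  obtain ⟨d, hd⟩ := exists_eq_natCast_of_nonneg_of_lt_top
    (ringKrullDim_nonneg_of_nontrivial (R := A)) ringKrullDim_lt_top
  rw [MvPolynomial.ringKrullDim_of_isNoetherianRing, hd]
  exact WithBot.coe_lt_coe.mpr (by exact_mod_cast ENat.natCast_lt_top (d + Nat.card (Fin n)))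

omit [IsLocalRing A] [IsNoetherianRing A] in
lemma ht_le_height {p : Ideal A} [hp : p.IsPrime] (hIp : I ≤ p) : ht I ≤ p.height := by
  rw [← IsLocalization.AtPrime.ringKrullDim_eq_height p (Localization.AtPrime p)]
  exact iInf₂_le (⟨p, hp⟩ : PrimeSpectrum A) hIp

lemma isEquimultiple_of_fiberDim_eq_ht (h : fiberDim I = ht I) : ∃ g, IsEquimultiple I g := by
  have hlt : ht I < ⊤ := h ▸ fiberDim_lt_top I
  have hI : I ≤ maximalIdeal A := by
    by_contra hcon
    refine hlt.ne (iInf₂_eq_top.mpr fun p hp ↦ absurd (hp.trans ?_) hcon)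
    exact IsLocalRing.le_maximalIdeal p.2.ne_top
  obtain ⟨g, hg⟩ := exists_eq_natCast_of_nonneg_of_lt_top
    (le_iInf₂ fun _ _ ↦ ringKrullDim_nonneg_of_nontrivial) hlt
  refine ⟨g, hI, (h.trans hg).le, ?_⟩
  rw [Ideal.height_eq_inf_minimalPrimes]
  refine le_iInf₂ fun p hp ↦ ?_
  have := hp.1.1
  exact WithBot.coe_le_coe.mp (hg.symm.trans_le (ht_le_height hp.1.2))

namespace IsEquimultiple

lemma le_natCard_of_isReduction_span (hI : IsEquimultiple I g) {ι : Type*} [Finite ι] {a : ι → A}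
    (h : IsReduction (Ideal.span (Set.range a)) I) : g ≤ Nat.card ι := by
  have : Fintype ι := Fintype.ofFinite ι
  have hne : Ideal.span (Set.range a) ≠ ⊤ :=
    ((h.1.trans hI.le_maximalIdeal).trans_lt (maximalIdeal.isMaximal A).ne_top.lt_top).ne
  have hle : I.height ≤ (Set.range a).ncard := h.height_eq ▸
    (Ideal.height_le_spanFinrank _ hne).trans (Nat.cast_le.mpr
      (Submodule.spanFinrank_span_le_ncard_of_finite (Set.finite_range a)))
  have hcard : (Set.range a).ncard ≤ Nat.card ι := Finite.card_range_le a
  exact (Nat.cast_le.mp (hI.le_height.trans hle)).trans hcard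

/- If the matrix expressing `b` through `a` were singular modulo the maximal ideal, then by Nakayama
some `b i` could be dropped, leaving fewer than `g` generators of a reduction. -/
lemma span_range_le_of_isReduction (hI : IsEquimultiple I g) {a b : Fin g → A}
    (ha : Ideal.span (Set.range a) ≤ I) (hb : IsReduction (Ideal.span (Set.range b)) I)
    (hba : Ideal.span (Set.range b) ≤ Ideal.span (Set.range a)) :
    Ideal.span (Set.range a) ≤ Ideal.span (Set.range b) := by
  choose M hM using fun i ↦ Ideal.mem_span_range_iff_exists_fun.mp
    (hba (Ideal.subset_span ⟨i, rfl⟩ : b i ∈ Ideal.span (Set.range b)))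
  obtain rfl : (Matrix.of M).mulVec a = b := funext hM
  by_cases hdet : IsUnit (Matrix.of M).det
  · rw [Ideal.span_le, Set.range_subset_iff]
    exact mem_of_isUnit_det_of_mulVec_mem hdet fun i ↦ Ideal.subset_span ⟨i, rfl⟩
  rw [Ideal.span_le, Set.range_subset_iff] at ha
  obtain ⟨i₀, hi₀⟩ := exists_mulVec_mem_span_sup_of_not_isUnit_det hdet ha
  have hdrop : IsReduction (Ideal.span (Set.range fun i : {i // i ≠ i₀} ↦
      (Matrix.of M).mulVec a i)) I := by
    refine hb.of_le_sup ((Ideal.span_mono ?_).trans hb.1) (Ideal.span_le.mpr ?_)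
    · rintro _ ⟨i, rfl⟩
      exact ⟨i, rfl⟩
    · rintro _ ⟨i, rfl⟩
      obtain rfl | hi := eq_or_ne i i₀
      exacts [hi₀, Ideal.mem_sup_left (Ideal.subset_span ⟨⟨i, hi⟩, rfl⟩)]
  have hle := hI.le_natCard_of_isReduction_span hdrop
  have hlt : Nat.card {i // i ≠ i₀} < Nat.card (Fin g) :=
    Finite.card_subtype_lt (not_not.mpr rfl)
  rw [Nat.card_fin] at hlt
  omega

variable [Infinite (ResidueField A)]

lemma isMinimalReduction_span (hI : IsEquimultiple I g) {a : Fin g → A}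
    (h : IsReduction (Ideal.span (Set.range a)) I) :
    IsMinimalReduction (Ideal.span (Set.range a)) I := by
  refine ⟨h, fun J hJ hle ↦ hle.antisymm ?_⟩
  obtain ⟨b, hbJ, hb⟩ := hJ.exists_fun_of_fiberDim_le hI.fiberDim_le
  exact (hI.span_range_le_of_isReduction h.1 hb (hbJ.trans hle)).trans hbJ

lemma exists_isMinimalReduction_le (hI : IsEquimultiple I g) (h : IsReduction J I) :
    ∃ J' ≤ J, IsMinimalReduction J' I := by
  obtain ⟨a, haJ, ha⟩ := h.exists_fun_of_fiberDim_le hI.fiberDim_le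
  exact ⟨_, haJ, hI.isMinimalReduction_span ha⟩

lemma exists_eq_span_range (hI : IsEquimultiple I g) (h : IsMinimalReduction J I) :
    ∃ a : Fin g → A, Ideal.span (Set.range a) = J := by
  obtain ⟨a, haJ, ha⟩ := h.1.exists_fun_of_fiberDim_le hI.fiberDim_le
  exact ⟨a, h.2 _ ha haJ⟩

lemma exists_pow_le_core (hI : IsEquimultiple I g) : ∃ n, I ^ n ≤ core I := by
  obtain ⟨n, hn⟩ := exists_forall_isReduction_pow_le (ι := Fin g) I
  refine ⟨n + 1, le_sInf fun J hJ ↦ ?_⟩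
  obtain ⟨a, rfl⟩ := hI.exists_eq_span_range hJ
  exact (hn a hJ.1).trans Ideal.mul_le_left

end IsEquimultiple

end Equimultiple

section Unmixed

variable {A : Type u} [CommRing A]

lemma ringKrullDim_quotient_add_height_le (J : Ideal A) :
    ringKrullDim (A ⧸ J) + J.height ≤ ringKrullDim A := by
  rw [ringKrullDim_quotient]
  cases isEmpty_or_nonempty (PrimeSpectrum.zeroLocus (R := A) J) with
  | inl _ => rw [Order.krullDim_eq_bot, WithBot.bot_add]; exact bot_le
  | inr hne =>
    have : Nonempty (PrimeSpectrum A) := ⟨hne.some.1⟩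
    rw [Order.krullDim_eq_iSup_coheight_of_nonempty, ringKrullDim,
      Order.krullDim_eq_iSup_height_add_coheight_of_nonempty, ← WithBot.coe_add, ENat.iSup_add]
    refine WithBot.coe_le_coe.mpr <| iSup_le fun p ↦ le_iSup_of_le p.1 ?_
    rw [add_comm, ← PrimeSpectrum.height_eq_orderHeight]
    exact add_le_add (Ideal.height_mono p.2)
      (Order.coheight_le_coheight_apply_of_strictMono Subtype.val (fun _ _ h ↦ h) p)

lemma ofList_ofFn {n : ℕ} (a : Fin n → A) :
    Ideal.ofList (List.ofFn a) = Ideal.span (Set.range a) :=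
  congrArg Ideal.span (Set.ext fun x ↦ List.mem_ofFn' a x)

variable {I J : Ideal A}

instance isPrime_coe_minimalPrimes (p : I.minimalPrimes) : (p : Ideal A).IsPrime := p.2.1.1

/-- The extension `J A_𝔭` of an ideal `J` to the localization at a minimal prime `𝔭` of `I`. -/
abbrev localizedAt (p : I.minimalPrimes) (J : Ideal A) : Ideal (Localization.AtPrime p.1) :=
  J.map (algebraMap A (Localization.AtPrime p.1))

lemma localizedAt_span_range (p : I.minimalPrimes) {ι : Type*} (a : ι → A) :
    localizedAt p (Ideal.span (Set.range a)) =
      Ideal.span (Set.range fun i ↦ algebraMap A (Localization.AtPrime p.1) (a i)) := by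
  rw [localizedAt, Ideal.map_span, ← Set.range_comp]
  rfl

lemma localizedAt_le_maximalIdeal (p : I.minimalPrimes) (hJ : J ≤ I) :
    localizedAt p J ≤ maximalIdeal (Localization.AtPrime p.1) := by
  rw [← Localization.AtPrime.map_eq_maximalIdeal]
  exact Ideal.map_mono (hJ.trans p.2.1.2)

lemma radical_localizedAt (p : I.minimalPrimes) :
    (localizedAt p I).radical = maximalIdeal (Localization.AtPrime p.1) := by
  rw [IsLocalization.AtPrime.radical_map_of_mem_minimalPrimes _ p.1 I p.2,
    Localization.AtPrime.map_eq_maximalIdeal]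

lemma height_localizedAt (p : I.minimalPrimes) : (localizedAt p I).height = p.1.height := by
  rw [← height_radical, radical_localizedAt]
  exact WithBot.coe_injective <| (maximalIdeal_height_eq_ringKrullDim).trans
    (IsLocalization.AtPrime.ringKrullDim_eq_height p.1 _)

lemma exists_pow_le_localizedAt [IsNoetherianRing A] (p : I.minimalPrimes) :
    ∃ n, maximalIdeal (Localization.AtPrime p.1) ^ n ≤ localizedAt p I :=
  Ideal.exists_pow_le_of_le_radical_of_fg (radical_localizedAt p).ge
    (IsNoetherian.noetherian _)

variable [IsLocalRing A] [IsNoetherianRing A] {g : ℕ}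

lemma isWeaklyRegular_ofFn_of_le_height (hCM : IsCMLocalRing A) {a : Fin g → A}
    (ha : ∀ i, a i ∈ maximalIdeal A) (hht : g ≤ (Ideal.span (Set.range a)).height) :
    RingTheory.Sequence.IsWeaklyRegular A (List.ofFn a) := by
  refine isWeaklyRegular_of_ringKrullDim_quotient_add_length_le hCM
    (List.forall_mem_ofFn_iff.mpr ha) ?_
  rw [ofList_ofFn, List.length_ofFn]
  refine le_trans ?_ (ringKrullDim_quotient_add_height_le (Ideal.span (Set.range a)))
  gcongr
  exact_mod_cast hht

namespace IsEquimultiple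

variable {a : Fin g → A}

lemma isWeaklyRegular_ofFn (hCM : IsCMLocalRing A) (hI : IsEquimultiple I g)
    (h : IsReduction (Ideal.span (Set.range a)) I) :
    RingTheory.Sequence.IsWeaklyRegular A (List.ofFn a) :=
  isWeaklyRegular_ofFn_of_le_height hCM
    (fun i ↦ hI.le_maximalIdeal (h.1 (Ideal.subset_span ⟨i, rfl⟩))) (h.height_eq ▸ hI.le_height)

lemma mem_minimalPrimes_of_mem_associatedPrimes (hCM : IsCMLocalRing A) (hI : IsEquimultiple I g)
    (h : IsReduction (Ideal.span (Set.range a)) I) {P : Ideal A}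
    (hP : P ∈ associatedPrimes A (A ⧸ Ideal.span (Set.range a))) : P ∈ I.minimalPrimes := by
  have := hP.isPrime
  have hIP : I ≤ P := by
    refine h.le_of_isPrime inferInstance ?_
    simpa only [Submodule.annihilator_top, Ideal.annihilator_quotient] using hP.annihilator_le
  obtain ⟨q, hq, hqP⟩ := Ideal.exists_minimalPrimes_le (J := P) hIP
  obtain rfl | hlt := hqP.eq_or_lt
  · exact hq
  exfalso
  obtain ⟨d, hd⟩ := exists_eq_natCast_of_nonneg_of_lt_top
    (ringKrullDim_nonneg_of_nontrivial (R := A)) ringKrullDim_lt_top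
  have hle : d + 1 ≤ d := by
    suffices (d : WithBot ℕ∞) + 1 ≤ d by exact_mod_cast this
    rw [← ofList_ofFn] at hP
    calc (d : WithBot ℕ∞) + 1 ≤ ringKrullDim (A ⧸ P) + g + 1 := by
          gcongr
          simpa only [hd, List.length_ofFn] using
            ringKrullDim_le_of_mem_associatedPrimes hCM
              (List.forall_mem_ofFn_iff.mpr fun i ↦ hI.le_maximalIdeal
                (h.1 (Ideal.subset_span ⟨i, rfl⟩)))
              (hI.isWeaklyRegular_ofFn hCM h) hP
      _ = ringKrullDim (A ⧸ P) + 1 + g := add_right_comm ..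
      _ ≤ ringKrullDim (A ⧸ q) + q.height := by
          gcongr
          · have := hq.1.1
            exact ringKrullDim_quotient_add_one_le_of_lt hlt
          · exact_mod_cast hI.le_height.trans (Ideal.height_mono hq.1.2)
      _ ≤ d := hd ▸ ringKrullDim_quotient_add_height_le q
  omega

lemma mem_of_forall_mem_map (hCM : IsCMLocalRing A) (hI : IsEquimultiple I g)
    (h : IsReduction (Ideal.span (Set.range a)) I) {w : A}
    (hw : ∀ p : I.minimalPrimes, algebraMap A (Localization.AtPrime p.1) w ∈
      localizedAt p (Ideal.span (Set.range a))) : w ∈ Ideal.span (Set.range a) := by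
  set J := Ideal.span (Set.range a)
  by_contra hwJ
  obtain ⟨P, hP, hle⟩ := exists_le_isAssociatedPrime_of_isNoetherianRing A
    (Ideal.Quotient.mk J w) (mt Ideal.Quotient.eq_zero_iff_mem.mp hwJ)
  have := hP.isPrime
  have hPI := hI.mem_minimalPrimes_of_mem_associatedPrimes hCM h hP
  obtain ⟨s, hs, hsw⟩ := (IsLocalization.algebraMap_mem_map_algebraMap_iff
    P.primeCompl _ _ _).mp (hw ⟨P, hPI⟩)
  refine hs (hle ?_)
  rw [Submodule.mem_colon_singleton, Submodule.mem_bot]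
  exact Ideal.Quotient.eq_zero_iff_mem.mpr hsw

lemma height_minimalPrime (hI : IsEquimultiple I g)
    (h : IsReduction (Ideal.span (Set.range a)) I) (p : I.minimalPrimes) : p.1.height = g := by
  refine le_antisymm ?_ (hI.le_height.trans (Ideal.height_mono p.2.1.2))
  have hp : p.1 ∈ (Ideal.span (Set.range a)).minimalPrimes := h.minimalPrimes_eq.symm ▸ p.2
  calc p.1.height ≤ (Set.range a).ncard :=
        Ideal.height_le_card_of_mem_minimalPrimes_span (Set.finite_range a) hp
    _ ≤ g := by exact_mod_cast (Finite.card_range_le a).trans_eq (Nat.card_fin g)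

lemma ringKrullDim_localization (hI : IsEquimultiple I g)
    (h : IsReduction (Ideal.span (Set.range a)) I) (p : I.minimalPrimes) :
    ringKrullDim (Localization.AtPrime p.1) = g := by
  rw [IsLocalization.AtPrime.ringKrullDim_eq_height p.1, hI.height_minimalPrime h p]
  rfl

lemma isWeaklyRegular_localizedAt (hI : IsEquimultiple I g)
    (h : IsReduction (Ideal.span (Set.range a)) I) (p : I.minimalPrimes)
    (hCM : IsCMLocalRing (Localization.AtPrime p.1)) :
    RingTheory.Sequence.IsWeaklyRegular (Localization.AtPrime p.1)
      (List.ofFn fun i ↦ algebraMap A (Localization.AtPrime p.1) (a i)) := by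
  refine isWeaklyRegular_ofFn_of_le_height hCM (fun i ↦ localizedAt_le_maximalIdeal p h.1
    (Ideal.mem_map_of_mem _ (Ideal.subset_span ⟨i, rfl⟩))) ?_
  rw [← localizedAt_span_range, (h.map _).height_eq, height_localizedAt, hI.height_minimalPrime h]

end IsEquimultiple

omit [IsNoetherianRing A] in
lemma exists_of_qType_ne_top {K : Ideal A} (h : qType A K ≠ ⊤) :
    ∃ rs : List A, (∀ x ∈ rs, x ∈ maximalIdeal A) ∧
      RingTheory.Sequence.IsRegular (A ⧸ K) rs ∧ (rs.length : ℕ∞) = qDepth A K ∧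
      muE (socle A (K ⊔ Ideal.ofList rs)) = qType A K :=
  csInf_mem <| Set.nonempty_iff_ne_empty.mpr fun hempty ↦
    h ((congrArg sInf hempty).trans sInf_empty)

lemma IsGorensteinLocalRing.length_moduleSocle_quotient_span (hA : IsGorensteinLocalRing A)
    (hdim : ringKrullDim A = g) {a : Fin g → A} (ha : ∀ i, a i ∈ maximalIdeal A)
    (hreg : RingTheory.Sequence.IsWeaklyRegular A (List.ofFn a)) :
    Module.length A (moduleSocle A (A ⧸ Ideal.span (Set.range a))) = 1 := by
  obtain ⟨hCM, htype⟩ := hA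
  obtain ⟨rs, hrs, hrsreg, hlen, hmu⟩ := exists_of_qType_ne_top (htype ▸ ENat.one_ne_top)
  have hlen : rs.length = g := by
    have : (rs.length : WithBot ℕ∞) = g := by
      rw [← hdim, ← rDim, hCM, ← hlen]
      rfl
    exact_mod_cast this
  have := length_moduleSocle_eq_of_isWeaklyRegular (M := A) (by simpa using hlen) hrs
    (List.forall_mem_ofFn_iff.mpr ha)
    (isWeaklyRegular_quotient_bot_iff.mp hrsreg.toIsWeaklyRegular) hreg
  rw [smul_eq_mul, Ideal.mul_top, smul_eq_mul, Ideal.mul_top, ofList_ofFn] at this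
  rw [← this, ← muE_socle, ← bot_sup_eq (Ideal.ofList rs), hmu, htype]

end Unmixed

section MembershipOnALine

open Polynomial

variable {A : Type u} [CommRing A]

lemma exists_isSMulRegular_X_sub_C [IsNoetherianRing A] {U : Set A} (hinf : U.Infinite)
    (hU : U.Pairwise fun u v ↦ IsUnit (u - v)) (M : Type u) [AddCommGroup M] [Module A[X] M]
    [Module.Finite A[X] M] : ∃ u ∈ U, IsSMulRegular M (X - C u : A[X]) := by
  by_contra! hcon
  have hmem (u : U) : ∃ P : associatedPrimes A[X] M, X - C u.1 ∈ P.1 := by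
    by_contra! hnot
    exact hcon u.1 u.2 (isSMulRegular_of_forall_notMem_associatedPrimes fun P hP ↦ hnot ⟨P, hP⟩)
  choose P hP using hmem
  have : Finite (associatedPrimes A[X] M) := (associatedPrimes.finite A[X] M).to_subtype
  have : Infinite U := hinf.to_subtype
  obtain ⟨u, v, huv, hPuv⟩ := Finite.exists_ne_map_eq_of_infinite P
  have hdiff : C (u.1 - v.1) ∈ (P u).1 := by
    have := (P u).1.sub_mem (hPuv ▸ hP v) (hP u)
    rwa [sub_sub_sub_cancel_left, ← C_sub] at this
  have hunit := (hU u.2 v.2 (Subtype.coe_ne_coe.mpr huv)).map (C : A →+* A[X])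
  exact (P u).2.isPrime.ne_top (Ideal.eq_top_of_isUnit_mem _ hdiff hunit)

/- Modulo `𝔞 = (aᵢ + X δᵢ)` the constant `w` is divisible by `X - u`, say `w ≡ (X - u) y`. As
`X - u` is regular modulo `𝔞 + (w)`, also `y ≡ c w` for some `c`, and `1 - (X - u) c` kills `w`. -/
lemma exists_eval_eq_one_mul_C_mem_span [IsNoetherianRing A] {ι : Type*} [Finite ι] {a δ : ι → A}
    {w : A} {U : Set A} (hU : U.Pairwise fun u v ↦ IsUnit (u - v))
    (hinf : {u ∈ U | w ∈ Ideal.span (Set.range fun i ↦ a i + u * δ i)}.Infinite) :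
    ∃ (u : A) (h : A[X]), h.eval u = 1 ∧
      h * C w ∈ Ideal.span (Set.range fun i ↦ C (a i) + X * C (δ i)) := by
  have : Fintype ι := Fintype.ofFinite ι
  set 𝔞 : Ideal A[X] := Ideal.span (Set.range fun i ↦ C (a i) + X * C (δ i))
  let K : Ideal A[X] := 𝔞 ⊔ Ideal.span {C w}
  obtain ⟨u, ⟨-, hu⟩, hreg⟩ := exists_isSMulRegular_X_sub_C hinf
    (hU.mono fun u hu ↦ hu.1) (A[X] ⧸ K)
  obtain ⟨y, hy⟩ : ∃ y : A[X], C w - (X - C u) * y ∈ 𝔞 := by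
    obtain ⟨c, hc⟩ := Ideal.mem_span_range_iff_exists_fun.mp hu
    refine ⟨-∑ i, C (c i) * C (δ i), ?_⟩
    have : C w - (X - C u) * -∑ i, C (c i) * C (δ i) = ∑ i, C (c i) * (C (a i) + X * C (δ i)) := by
      rw [← hc, mul_neg, sub_neg_eq_add, map_sum, Finset.mul_sum, ← Finset.sum_add_distrib]
      refine Finset.sum_congr rfl fun i _ ↦ ?_
      rw [C_mul, C_add, C_mul]
      ring
    exact this ▸ sum_mem fun i _ ↦ Ideal.mul_mem_left _ _ (Ideal.subset_span ⟨i, rfl⟩)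
  have hyK : y ∈ K := by
    have hmul : (X - C u) * y ∈ K := (K.sub_mem_iff_right
      (Ideal.mem_sup_right (Ideal.mem_span_singleton_self _))).mp (Ideal.mem_sup_left hy)
    rw [← Ideal.Quotient.eq_zero_iff_mem] at hmul ⊢
    exact hreg.right_eq_zero_of_smul hmul
  obtain ⟨y', hy', z, hz, rfl⟩ := Submodule.mem_sup.mp hyK
  obtain ⟨c, rfl⟩ := Ideal.mem_span_singleton'.mp hz
  refine ⟨u, 1 - (X - C u) * c, by simp, ?_⟩
  convert 𝔞.add_mem hy (𝔞.mul_mem_left (X - C u) hy') using 1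
  ring

lemma isSMulRegular_add_of_pow_smul_eq_zero {M : Type*} [AddCommGroup M] [Module A M] {x c : A}
    (hx : IsSMulRegular M x) {n : ℕ} (hc : ∀ m : M, c ^ n • m = 0) : IsSMulRegular M (x + c) := by
  refine .of_right_eq_zero_of_smul fun m hm ↦ ?_
  have hxc : x • m = -c • m := by
    rw [neg_smul]
    exact eq_neg_of_add_eq_zero_left (by rwa [← add_smul])
  have hpow (k : ℕ) : x ^ k • m = (-c) ^ k • m := by
    induction k with
    | zero => simp
    | succ k ih => rw [pow_succ', mul_smul, ih, smul_comm, hxc, smul_smul, ← pow_succ]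
  refine (hx.pow n).right_eq_zero_of_smul ?_
  rw [hpow, neg_pow, mul_smul, hc, smul_zero]

lemma exists_coeff_notMem_maximalIdeal [IsLocalRing A] {h : A[X]} {u : A} (hu : h.eval u = 1) :
    ∃ k, h.coeff k ∉ maximalIdeal A := by
  by_contra! hcon
  refine (Ideal.ne_top_iff_one _).mp (maximalIdeal.isMaximal A).ne_top ?_
  rw [← hu, eval_eq_sum]
  exact sum_mem fun k _ ↦ Ideal.mul_mem_right _ _ (hcon k)

end MembershipOnALine

section PowerSeriesRegularity

open RingTheory.Sequence PowerSeries
open scoped Pointwise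

variable {A : Type u} [CommRing A]

lemma isWeaklyRegular_X_cons {xs : List A⟦X⟧} (hxs : IsWeaklyRegular A (xs.map constantCoeff)) :
    IsWeaklyRegular A⟦X⟧ (X :: xs) := by
  rw [isWeaklyRegular_cons_iff]
  refine ⟨X_mul_injective, ?_⟩
  have hker : (X : A⟦X⟧) • (⊤ : Submodule A⟦X⟧ A⟦X⟧) = RingHom.ker (constantCoeff (R := A)) := by
    ext f
    rw [RingHom.mem_ker, ← X_dvd_iff]
    simp [Submodule.mem_smul_pointwise_iff_exists, dvd_def, eq_comm]
  let e : QuotSMulTop (X : A⟦X⟧) A⟦X⟧ ≃+ A :=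
    (Submodule.quotEquivOfEq _ _ hker).toAddEquiv.trans
      (RingHom.quotientKerEquivOfSurjective constantCoeff_surj).toAddEquiv
  refine (e.isWeaklyRegular_congr ?_).mpr hxs
  refine List.forall₂_map_right_iff.mpr (List.forall₂_same.mpr fun f _ y ↦ ?_)
  obtain ⟨y, rfl⟩ := Submodule.Quotient.mk_surjective _ y
  exact map_mul constantCoeff f y

variable [IsLocalRing A]

lemma isSMulRegular_of_coeff_notMem {M : Type*} [AddCommGroup M] [Module A⟦X⟧ M]
    (hX : IsSMulRegular M (X : A⟦X⟧)) {n : ℕ}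
    (hn : ∀ c ∈ maximalIdeal A, ∀ m : M, (C c : A⟦X⟧) ^ n • m = 0) {f : A⟦X⟧} {k : ℕ}
    (hf : coeff k f ∉ maximalIdeal A) : IsSMulRegular M f := by
  induction k generalizing f with
  | zero =>
    refine IsUnit.isSMulRegular M (isUnit_iff_constantCoeff.mpr ?_)
    simpa using hf
  | succ k ih =>
    by_cases hc : constantCoeff f ∈ maximalIdeal A
    · rw [eq_X_mul_shift_add_const f]
      refine isSMulRegular_add_of_pow_smul_eq_zero (hX.mul (ih ?_)) (hn _ hc)
      rwa [coeff_mk]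
    · exact IsUnit.isSMulRegular M (isUnit_iff_constantCoeff.mpr (by simpa using hc))

variable [IsNoetherianRing A] {I : Ideal A} {g : ℕ} {a δ : Fin g → A}

lemma isReduction_span_C_add_X_mul_C (hδ : ∀ i, δ i ∈ I)
    (h : IsReduction (Ideal.span (Set.range a)) I) :
    IsReduction (Ideal.span (Set.range fun i ↦ (C (a i) + X * C (δ i) : A⟦X⟧))) (I.map C) := by
  have hCδ (i) : (C (δ i) : A⟦X⟧) ∈ I.map C := Ideal.mem_map_of_mem C (hδ i)
  have hX : (X : A⟦X⟧) ∈ maximalIdeal A⟦X⟧ := by simp [isUnit_iff_constantCoeff]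
  refine (h.map (C : A →+* A⟦X⟧)).of_le_sup ?_ ?_
  · rw [Ideal.span_le, Set.range_subset_iff]
    exact fun i ↦ add_mem (Ideal.mem_map_of_mem C (h.1 (Ideal.subset_span ⟨i, rfl⟩)))
      (Ideal.mul_mem_left _ _ (hCδ i))
  · rw [Ideal.map_span, ← Set.range_comp, Ideal.span_le, Set.range_subset_iff]
    refine fun i ↦ ?_
    rw [Function.comp_apply, ← add_sub_cancel_right (C (a i)) (X * C (δ i))]
    exact sub_mem (Ideal.mem_sup_left (Ideal.subset_span ⟨i, rfl⟩))
      (Ideal.mem_sup_right (Ideal.mul_mem_mul hX (hCδ i)))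

lemma isSMulRegular_quotient_span_C_add_X_mul_C (hI : I ≤ maximalIdeal A) {k : ℕ}
    (hk : maximalIdeal A ^ k ≤ I) (hδ : ∀ i, δ i ∈ I)
    (h : IsReduction (Ideal.span (Set.range a)) I) (hreg : IsWeaklyRegular A (List.ofFn a))
    {f : A⟦X⟧} {j : ℕ} (hf : coeff j f ∉ maximalIdeal A) :
    IsSMulRegular (A⟦X⟧ ⧸ Ideal.span (Set.range fun i ↦ (C (a i) + X * C (δ i) : A⟦X⟧))) f := by
  have ha (i) : a i ∈ maximalIdeal A := hI (h.1 (Ideal.subset_span ⟨i, rfl⟩))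
  have hX : IsSMulRegular
      (A⟦X⟧ ⧸ Ideal.span (Set.range fun i ↦ (C (a i) + X * C (δ i) : A⟦X⟧))) (X : A⟦X⟧) := by
    rw [← ofList_ofFn]
    refine ((isWeaklyRegular_ring_cons_iff ?_ ?_).mp (isWeaklyRegular_X_cons ?_)).2
    · simp [isUnit_iff_constantCoeff]
    · simpa [List.forall_mem_ofFn_iff, isUnit_iff_constantCoeff] using ha
    · simpa [List.map_ofFn, Function.comp_def] using hreg
  obtain ⟨n, hn⟩ := (isReduction_span_C_add_X_mul_C hδ h).exists_pow_le
  refine isSMulRegular_of_coeff_notMem hX (n := k * n) (fun c hc m ↦ ?_) hf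
  obtain ⟨m, rfl⟩ := Ideal.Quotient.mk_surjective m
  refine Ideal.Quotient.eq_zero_iff_mem.mpr (Ideal.mul_mem_right _ _ (hn ?_))
  rw [pow_mul, ← map_pow]
  exact Ideal.pow_mem_pow (Ideal.mem_map_of_mem C (hk (Ideal.pow_mem_pow hc k))) n

lemma mem_span_of_mul_C_mem_span (hI : I ≤ maximalIdeal A) {k : ℕ}
    (hk : maximalIdeal A ^ k ≤ I) (hδ : ∀ i, δ i ∈ I)
    (h : IsReduction (Ideal.span (Set.range a)) I) (hreg : IsWeaklyRegular A (List.ofFn a))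
    {f : A⟦X⟧} {j : ℕ} (hf : coeff j f ∉ maximalIdeal A) {w : A}
    (hw : f * C w ∈ Ideal.span (Set.range fun i ↦ (C (a i) + X * C (δ i) : A⟦X⟧))) :
    w ∈ Ideal.span (Set.range a) := by
  have hCw : C w ∈ Ideal.span (Set.range fun i ↦ (C (a i) + X * C (δ i) : A⟦X⟧)) := by
    rw [← Ideal.Quotient.eq_zero_iff_mem] at hw ⊢
    exact (isSMulRegular_quotient_span_C_add_X_mul_C hI hk hδ h hreg hf).right_eq_zero_of_smul hw
  have := Ideal.mem_map_of_mem constantCoeff hCw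
  rw [Ideal.map_span, ← Set.range_comp] at this
  simpa [Function.comp_def] using this

lemma finite_setOf_mem_span_add_mul (hI : I ≤ maximalIdeal A) {k : ℕ}
    (hk : maximalIdeal A ^ k ≤ I) (hδ : ∀ i, δ i ∈ I)
    (h : IsReduction (Ideal.span (Set.range a)) I) (hreg : IsWeaklyRegular A (List.ofFn a))
    {w : A} (hw : w ∉ Ideal.span (Set.range a)) {U : Set A}
    (hU : U.Pairwise fun u v ↦ IsUnit (u - v)) :
    {u ∈ U | w ∈ Ideal.span (Set.range fun i ↦ a i + u * δ i)}.Finite := by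
  by_contra hinf
  obtain ⟨u, f, hfu, hfw⟩ := exists_eval_eq_one_mul_C_mem_span hU hinf
  obtain ⟨j, hj⟩ := exists_coeff_notMem_maximalIdeal hfu
  refine hw (mem_span_of_mul_C_mem_span hI hk hδ h hreg (f := f) (j := j) (by simpa using hj) ?_)
  have := Ideal.mem_map_of_mem Polynomial.coeToPowerSeries.ringHom hfw
  rw [Ideal.map_span, ← Set.range_comp] at this
  simpa only [Function.comp_def, map_add, map_mul, Polynomial.coeToPowerSeries.ringHom_apply,
    Polynomial.coe_C, Polynomial.coe_X] using this

end PowerSeriesRegularity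

section Core

variable {A : Type u} [CommRing A] {I J J' : Ideal A}

lemma core_le (h : IsMinimalReduction J I) : core I ≤ J := sInf_le h

variable [IsNoetherianRing A]

lemma exists_notMem_forall_algebraMap_mem_localizedAt {K : Ideal A}
    (hK : ∀ q : I.minimalPrimes, ∃ k,
      maximalIdeal (Localization.AtPrime q.1) ^ k ≤ localizedAt q K) (p : I.minimalPrimes) :
    ∃ s ∉ p.1, ∀ q ≠ p, algebraMap A (Localization.AtPrime q.1) s ∈ localizedAt q K := by
  classical
  have : Finite I.minimalPrimes := I.finite_minimalPrimes_of_isNoetherianRing A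
  have := Fintype.ofFinite I.minimalPrimes
  choose k hk using hK
  have hprod : ¬∏ q ∈ Finset.univ.erase p, q.1 ^ k q ≤ p.1 := fun hle ↦ by
    obtain ⟨q, hq, hqp⟩ := (Ideal.IsPrime.prod_le inferInstance).mp hle
    have hqp : q.1 ≤ p.1 := Ideal.IsPrime.le_of_pow_le hqp
    exact Finset.ne_of_mem_erase hq (Subtype.ext (hqp.antisymm (p.2.2 q.2.1 hqp)))
  obtain ⟨s, hs, hsp⟩ := SetLike.not_le_iff_exists.mp hprod
  refine ⟨s, hsp, fun q hq ↦ hk q ?_⟩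
  rw [← Localization.AtPrime.map_eq_maximalIdeal, ← Ideal.map_pow]
  refine Ideal.mem_map_of_mem _ (Ideal.le_of_dvd ?_ hs)
  exact Finset.dvd_prod_of_mem (fun q : I.minimalPrimes ↦ q.1 ^ k q)
    (Finset.mem_erase.mpr ⟨hq, Finset.mem_univ q⟩)

variable [IsLocalRing A] {g : ℕ}

namespace IsEquimultiple

lemma finite_setOf_mem_localizedAt (hI : IsEquimultiple I g) {a δ : Fin g → A}
    (h : IsReduction (Ideal.span (Set.range a)) I) (hδ : ∀ i, δ i ∈ I) (p : I.minimalPrimes)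
    (hCM : IsCMLocalRing (Localization.AtPrime p.1)) {w : Localization.AtPrime p.1}
    (hw : w ∉ localizedAt p (Ideal.span (Set.range a))) {U : Set A}
    (hU : U.Pairwise fun u v ↦ IsUnit (u - v)) :
    {u ∈ U | w ∈ localizedAt p (Ideal.span (Set.range fun i ↦ a i + u * δ i))}.Finite := by
  let f := algebraMap A (Localization.AtPrime p.1)
  obtain ⟨k, hk⟩ := exists_pow_le_localizedAt p
  have hfU : U.Pairwise fun u v ↦ IsUnit (f u - f v) :=
    hU.mono' fun u v huv ↦ by simpa only [map_sub] using huv.map f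
  have hinj : Set.InjOn f U := fun u hu v hv huv ↦ by
    by_contra hne
    exact (sub_eq_zero.mpr huv ▸ not_isUnit_zero) (hfU hu hv hne)
  have hred := h.map f
  rw [← localizedAt, ← localizedAt, localizedAt_span_range] at hred
  rw [localizedAt_span_range] at hw
  have hfin := finite_setOf_mem_span_add_mul (localizedAt_le_maximalIdeal p le_rfl) hk
    (fun i ↦ Ideal.mem_map_of_mem f (hδ i)) hred (hI.isWeaklyRegular_localizedAt h p hCM) hw
    (hinj.pairwise_image.mpr hfU)
  refine Set.Finite.of_finite_image (hfin.subset ?_) (hinj.mono (Set.sep_subset ..))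
  rintro _ ⟨u, ⟨hu, huw⟩, rfl⟩
  rw [localizedAt_span_range] at huw
  exact ⟨⟨u, hu, rfl⟩, by simpa only [map_add, map_mul] using huw⟩

lemma finite_setOf_mem_localizedAt_line (hI : IsEquimultiple I g) {a b : Fin g → A}
    (ha : IsReduction (Ideal.span (Set.range a)) I) (hb : IsReduction (Ideal.span (Set.range b)) I)
    (p : I.minimalPrimes) (hCM : IsCMLocalRing (Localization.AtPrime p.1))
    {w : Localization.AtPrime p.1} (hw : w ∉ localizedAt p (Ideal.span (Set.range a)) ∨
      w ∉ localizedAt p (Ideal.span (Set.range b))) {U : Set A}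
    (hU : U.Pairwise fun u v ↦ IsUnit (u - v)) :
    {u ∈ U | w ∈ localizedAt p
      (Ideal.span (Set.range fun i ↦ a i + u * (b i - a i)))}.Finite := by
  have haI (i) : a i ∈ I := ha.1 (Ideal.subset_span ⟨i, rfl⟩)
  have hbI (i) : b i ∈ I := hb.1 (Ideal.subset_span ⟨i, rfl⟩)
  obtain hwa | hwb := hw
  · exact hI.finite_setOf_mem_localizedAt ha (fun i ↦ I.sub_mem (hbI i) (haI i)) p hCM hwa hU
  have hinj : Function.Injective fun u : A ↦ 1 - u := sub_right_injective
  have hfin := hI.finite_setOf_mem_localizedAt hb (fun i ↦ I.sub_mem (haI i) (hbI i)) p hCM hwb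
    (hinj.injOn.pairwise_image.mpr <| hU.mono' fun u v huv ↦ by
      simpa only [Function.onFun, sub_sub_sub_cancel_left, neg_sub] using huv.neg)
  refine Set.Finite.of_finite_image (hfin.subset ?_) hinj.injOn
  rintro _ ⟨u, ⟨hu, huw⟩, rfl⟩
  refine ⟨⟨u, hu, rfl⟩, ?_⟩
  have hline (i) : b i + (1 - u) * (a i - b i) = a i + u * (b i - a i) := by ring
  simpa only [hline] using huw

variable [Infinite (ResidueField A)]

lemma exists_isMinimalReduction_notMem_insert (hI : IsEquimultiple I g)
    (hCM : ∀ p : I.minimalPrimes, IsCMLocalRing (Localization.AtPrime p.1))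
    {w : ∀ p : I.minimalPrimes, Localization.AtPrime p.1} {s : Set I.minimalPrimes} (hs : s.Finite)
    (hJ : IsMinimalReduction J I) (hwJ : ∀ p ∈ s, w p ∉ localizedAt p J) {q : I.minimalPrimes}
    (hJ' : IsMinimalReduction J' I) (hwJ' : w q ∉ localizedAt q J') :
    ∃ J'', IsMinimalReduction J'' I ∧ ∀ p ∈ insert q s, w p ∉ localizedAt p J'' := by
  obtain ⟨a, rfl⟩ := hI.exists_eq_span_range hJ
  obtain ⟨b, rfl⟩ := hI.exists_eq_span_range hJ'
  obtain ⟨U, hUinf, hU⟩ := exists_infinite_pairwise_isUnit_sub (A := A)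
  have hδ (i) : b i - a i ∈ I := I.sub_mem (hJ'.1.1 (Ideal.subset_span ⟨i, rfl⟩))
    (hJ.1.1 (Ideal.subset_span ⟨i, rfl⟩))
  have hbad : (⋃ p ∈ insert q s, {u ∈ U | w p ∈ localizedAt p
      (Ideal.span (Set.range fun i ↦ a i + u * (b i - a i)))}).Finite :=
    (hs.insert q).biUnion fun p hp ↦ by
      refine hI.finite_setOf_mem_localizedAt_line hJ.1 hJ'.1 p (hCM p) ?_ hU
      obtain rfl | hps := hp
      exacts [.inr hwJ', .inl (hwJ p hps)]
  obtain ⟨u, huU, hu⟩ :=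
    (hUinf.sdiff ((hJ.1.finite_setOf_not_isReduction hδ hU).union hbad)).nonempty
  simp only [Set.mem_union, Set.mem_iUnion, Set.mem_ofPred_eq, not_or, not_exists, huU, true_and,
    not_not] at hu
  exact ⟨_, hI.isMinimalReduction_span hu.1, hu.2⟩

lemma exists_isMinimalReduction_forall_notMem (hI : IsEquimultiple I g)
    (hCM : ∀ p : I.minimalPrimes, IsCMLocalRing (Localization.AtPrime p.1))
    {w : ∀ p : I.minimalPrimes, Localization.AtPrime p.1} (s : Set I.minimalPrimes)
    (hw : ∀ p ∈ s, ∃ J, IsMinimalReduction J I ∧ w p ∉ localizedAt p J) :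
    ∃ J, IsMinimalReduction J I ∧ ∀ p ∈ s, w p ∉ localizedAt p J := by
  have : Finite I.minimalPrimes := I.finite_minimalPrimes_of_isNoetherianRing A
  induction s, s.toFinite using Set.Finite.induction_on with
  | empty =>
    obtain ⟨J, -, hJ⟩ := hI.exists_isMinimalReduction_le (isReduction_refl I)
    exact ⟨J, hJ, by simp⟩
  | @insert q s _ hs ih =>
    obtain ⟨J, hJ, hwJ⟩ := ih fun p hp ↦ hw p (Set.mem_insert_of_mem q hp)
    obtain ⟨J', hJ', hwJ'⟩ := hw q (Set.mem_insert q s)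
    exact hI.exists_isMinimalReduction_notMem_insert hCM hs hJ hwJ hJ' hwJ'

lemma core_le_self (hI : IsEquimultiple I g) : core I ≤ I := by
  obtain ⟨J, hJI, hJ⟩ := hI.exists_isMinimalReduction_le (isReduction_refl I)
  exact (core_le hJ).trans hJI

lemma exists_pow_le_localizedAt_core (hI : IsEquimultiple I g) (p : I.minimalPrimes) :
    ∃ n, maximalIdeal (Localization.AtPrime p.1) ^ n ≤ localizedAt p (core I) := by
  obtain ⟨n, hn⟩ := hI.exists_pow_le_core
  obtain ⟨k, hk⟩ := exists_pow_le_localizedAt p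
  refine ⟨k * n, ?_⟩
  rw [pow_mul]
  refine (Ideal.pow_right_mono hk n).trans ?_
  rw [localizedAt, ← Ideal.map_pow]
  exact Ideal.map_mono hn

lemma mem_localizedAt_core (hCM : IsCMLocalRing A) (hI : IsEquimultiple I g) (p : I.minimalPrimes)
    {w : Localization.AtPrime p.1} (hw : ∀ J, IsMinimalReduction J I → w ∈ localizedAt p J) :
    w ∈ localizedAt p (core I) := by
  obtain ⟨y, t, rfl⟩ := IsLocalization.exists_mk'_eq p.1.primeCompl w
  obtain ⟨s, hsp, hs⟩ := exists_notMem_forall_algebraMap_mem_localizedAt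
    hI.exists_pow_le_localizedAt_core p
  refine (IsLocalization.mk'_mem_map_algebraMap_iff p.1.primeCompl _ _ _ _).mpr ⟨s, hsp, ?_⟩
  refine (Submodule.mem_sInf).mpr fun J hJ ↦ ?_
  obtain ⟨a, rfl⟩ := hI.exists_eq_span_range hJ
  refine hI.mem_of_forall_mem_map hCM hJ.1 fun q ↦ ?_
  rw [map_mul]
  obtain rfl | hqp := eq_or_ne q p
  · obtain ⟨m, hm, hmy⟩ :=
      (IsLocalization.mk'_mem_map_algebraMap_iff q.1.primeCompl _ _ _ _).mp (hw _ hJ)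
    exact Ideal.mul_mem_left _ _
      ((IsLocalization.algebraMap_mem_map_algebraMap_iff q.1.primeCompl _ _ _).mpr ⟨m, hm, hmy⟩)
  · exact Ideal.mul_mem_right _ _ (Ideal.map_mono (core_le hJ) (hs q hqp))

lemma le_core (hCM : IsCMLocalRing A) (hI : IsEquimultiple I g) {K : Ideal A}
    (hK : ∀ p : I.minimalPrimes, localizedAt p K ≤ localizedAt p (core I)) : K ≤ core I := by
  refine le_sInf fun J hJ w hw ↦ ?_
  obtain ⟨a, rfl⟩ := hI.exists_eq_span_range hJ
  exact hI.mem_of_forall_mem_map hCM hJ.1 fun p ↦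
    Ideal.map_mono (core_le hJ) (hK p (Ideal.mem_map_of_mem _ hw))

lemma length_moduleSocle_localizedAt (hI : IsEquimultiple I g) (hJ : IsMinimalReduction J I)
    {p : I.minimalPrimes} (hp : IsGorensteinLocalRing (Localization.AtPrime p.1)) :
    Module.length (Localization.AtPrime p.1)
      (moduleSocle (Localization.AtPrime p.1)
        (Localization.AtPrime p.1 ⧸ localizedAt p J)) = 1 := by
  obtain ⟨a, rfl⟩ := hI.exists_eq_span_range hJ
  have := hp.length_moduleSocle_quotient_span (hI.ringKrullDim_localization hJ.1 p)
    (fun i ↦ localizedAt_le_maximalIdeal p hJ.1.1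
      (Ideal.mem_map_of_mem _ (Ideal.subset_span ⟨i, rfl⟩)))
    (hI.isWeaklyRegular_localizedAt hJ.1 p hp.1)
  rwa [localizedAt_span_range]

end IsEquimultiple

end Core

section SocleOfQuotient

variable {A : Type*} [CommRing A]

lemma length_mono {M : Type*} [AddCommGroup M] [Module A M] {N N' : Submodule A M} (h : N ≤ N') :
    Module.length A N ≤ Module.length A N' :=
  Module.length_le_of_injective _ (Submodule.inclusion_injective h)

lemma length_lt_length {M : Type*} [AddCommGroup M] [Module A M] {N N' : Submodule A M}
    (h : N < N') (hN : Module.length A N ≠ ⊤) : Module.length A N < Module.length A N' := by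
  rw [Module.length_submodule] at hN ⊢
  rw [Module.length_submodule]
  exact Order.height_strictMono h hN.lt_top

variable [IsLocalRing A]

lemma length_moduleSocle_ne_top {M : Type*} [AddCommGroup M] [Module A M] [IsNoetherian A M] :
    Module.length A (moduleSocle A M) ≠ ⊤ := by
  obtain ⟨s, hs⟩ := IsNoetherian.noetherian (moduleSocle A M)
  have hle := length_span_le_card (s := s) fun x hx ↦ hs ▸ Submodule.subset_span hx
  rw [hs] at hle
  exact ne_top_of_le_ne_top (ENat.natCast_ne_top _) hle

lemma length_moduleSocle_quotient_iInf_le {M : Type*} [AddCommGroup M] [Module A M] {ι : Type*}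
    [Fintype ι] (N : ι → Submodule A M) :
    Module.length A (moduleSocle A (M ⧸ ⨅ i, N i)) ≤
      ∑ i, Module.length A (moduleSocle A (M ⧸ N i)) := by
  let factor (i) : (M ⧸ ⨅ i, N i) →ₗ[A] M ⧸ N i := Submodule.factor (iInf_le N i)
  have hfactor (i) : ∀ x ∈ moduleSocle A (M ⧸ ⨅ i, N i), factor i x ∈ moduleSocle A (M ⧸ N i) :=
    fun x hx ↦ mem_moduleSocle.mpr fun b hb ↦ by
      rw [← map_smul, mem_moduleSocle.mp hx b hb, map_zero]
  rw [← Module.length_pi_of_fintype]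
  refine Module.length_le_of_injective
    (LinearMap.pi fun i ↦ (factor i).restrict (hfactor i)) ?_
  refine (injective_iff_map_eq_zero _).mpr fun ⟨x, hx⟩ h ↦ Subtype.ext ?_
  obtain ⟨m, rfl⟩ := Submodule.mkQ_surjective _ x
  refine (Submodule.Quotient.mk_eq_zero _).mpr (Submodule.mem_iInf _ |>.mpr fun i ↦ ?_)
  exact (Submodule.Quotient.mk_eq_zero _).mp (congrArg Subtype.val (congrFun h i))

lemma qType_eq_length_moduleSocle {K : Ideal A} (hK : K ≤ maximalIdeal A) {n : ℕ}
    (hn : maximalIdeal A ^ n ≤ K) : qType A K = Module.length A (moduleSocle A (A ⧸ K)) := by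
  have hKtop : K ≠ ⊤ := (hK.trans_lt (maximalIdeal.isMaximal A).ne_top.lt_top).ne
  have := Ideal.Quotient.nontrivial_iff.mpr hKtop
  have hnil {rs : List A} (hrs : ∀ x ∈ rs, x ∈ maximalIdeal A)
      (hreg : RingTheory.Sequence.IsRegular (A ⧸ K) rs) : rs = [] := by
    cases rs with
    | nil => rfl
    | cons x rs =>
      exfalso
      have hx := ((RingTheory.Sequence.isWeaklyRegular_cons_iff ..).mp hreg.toIsWeaklyRegular).1
      refine one_ne_zero (α := A ⧸ K) ((hx.pow n).right_eq_zero_of_smul ?_)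
      rw [Algebra.smul_def, mul_one]
      exact Ideal.Quotient.eq_zero_iff_mem.mpr
        (hn (Ideal.pow_mem_pow (hrs x (List.mem_cons_self ..)) n))
  have hdepth : qDepth A K = 0 := by
    refine sSup_eq_bot.mpr ?_
    rintro _ ⟨rs, hrs, hreg, rfl⟩
    rw [hnil hrs hreg]
    rfl
  rw [← muE_socle]
  refine le_antisymm (sInf_le ⟨[], by simp, .nil A _, by rw [hdepth]; rfl, by
    rw [Ideal.ofList_nil, sup_bot_eq]⟩) (le_sInf ?_)
  rintro _ ⟨rs, hrs, hreg, -, rfl⟩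
  rw [hnil hrs hreg, Ideal.ofList_nil, sup_bot_eq]

/-- The socle of the ideal `(H + K) / K` of `A ⧸ K`, regarded as a submodule of `A ⧸ K`. -/
def relSocle (K H : Ideal A) : Submodule A (A ⧸ K) :=
  moduleSocle A (A ⧸ K) ⊓ Submodule.map K.mkQ H

variable {K H H' : Ideal A}

lemma relSocle_mono (h : H ≤ H') : relSocle K H ≤ relSocle K H' :=
  inf_le_inf_left _ (Submodule.map_mono h)

lemma length_relSocle_le :
    Module.length A (relSocle K H) ≤ Module.length A (moduleSocle A (A ⧸ K)) :=
  length_mono inf_le_left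

lemma mem_of_mkQ_mem_relSocle (hK : K ≤ H) {b : A} (hb : K.mkQ b ∈ relSocle K H) : b ∈ H := by
  obtain ⟨c, hc, hcb⟩ := hb.2
  exact (H.sub_mem_iff_right hc).mp (hK ((Submodule.Quotient.eq K).mp hcb))

lemma exists_notMem_mkQ_mem_relSocle (h : relSocle K H ≠ ⊥) :
    ∃ b ∉ K, K.mkQ b ∈ relSocle K H := by
  obtain ⟨y, hy, hy0⟩ := Submodule.exists_mem_ne_zero_of_ne_bot h
  obtain ⟨b, rfl⟩ := K.mkQ_surjective y
  exact ⟨b, mt (Submodule.Quotient.mk_eq_zero K).mpr hy0, hy⟩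

lemma le_of_relSocle_eq_bot [IsNoetherianRing A] {n : ℕ} (hn : maximalIdeal A ^ n ≤ K)
    (h : relSocle K H = ⊥) : H ≤ K := by
  let N : Submodule A (A ⧸ K) := Submodule.map K.mkQ H
  have hbot : moduleSocle A N = ⊥ := by
    refine Submodule.map_injective_of_injective N.injective_subtype ?_
    rw [map_moduleSocle_of_injective N.injective_subtype, Submodule.range_subtype,
      Submodule.map_bot]
    exact h
  obtain ⟨x, hx, hreg⟩ := moduleSocle_eq_bot_iff.mp hbot
  intro b hb
  have hbx : x ^ n • (⟨K.mkQ b, b, hb, rfl⟩ : N) = 0 := Subtype.ext <|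
    (Submodule.Quotient.mk_eq_zero K).mpr (K.mul_mem_right b (hn (Ideal.pow_mem_pow hx n)))
  exact (Submodule.Quotient.mk_eq_zero K).mp
    (congrArg Subtype.val ((hreg.pow n).right_eq_zero_of_smul hbx))

end SocleOfQuotient

section Gamma

variable {A : Type u} [CommRing A] {I J : Ideal A} {g : ℕ}

lemma localizedAt_iInf (p : I.minimalPrimes) {ι : Type*} [Finite ι] (K : ι → Ideal A) :
    localizedAt p (⨅ i, K i) = ⨅ i, localizedAt p (K i) := by
  have := Fintype.ofFinite ι
  rw [← Finset.inf_univ_eq_iInf, ← Finset.inf_univ_eq_iInf]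
  exact map_finset_inf (IsLocalization.mapFrameHom p.1.primeCompl _) Finset.univ K

variable [IsLocalRing A] [IsNoetherianRing A]

/-- The socle of `(A / core I)_𝔭` at a minimal prime `𝔭` of `I`, cut down to the elements coming
from the ideal `H`. -/
noncomputable abbrev coreSocle (p : I.minimalPrimes) (H : Ideal A) :
    Submodule (Localization.AtPrime p.1) (Localization.AtPrime p.1 ⧸ localizedAt p (core I)) :=
  relSocle (localizedAt p (core I)) (localizedAt p H)

namespace IsEquimultiple

variable [Infinite (ResidueField A)]

lemma qType_localizedAt_core (hI : IsEquimultiple I g) (p : I.minimalPrimes) :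
    qType (Localization.AtPrime p.1) (localizedAt p (core I)) =
      Module.length (Localization.AtPrime p.1) (moduleSocle (Localization.AtPrime p.1)
        (Localization.AtPrime p.1 ⧸ localizedAt p (core I))) := by
  obtain ⟨n, hn⟩ := hI.exists_pow_le_localizedAt_core p
  exact qType_eq_length_moduleSocle (localizedAt_le_maximalIdeal p hI.core_le_self) hn

lemma qType_localizedAt_core_ne_top (hI : IsEquimultiple I g) (p : I.minimalPrimes) :
    qType (Localization.AtPrime p.1) (localizedAt p (core I)) ≠ ⊤ :=
  hI.qType_localizedAt_core p ▸ length_moduleSocle_ne_top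

lemma qType_localizedAt_core_le_gamma (hI : IsEquimultiple I g) {p : I.minimalPrimes}
    (hp : IsGorensteinLocalRing (Localization.AtPrime p.1)) :
    qType (Localization.AtPrime p.1) (localizedAt p (core I)) ≤ gamma I := by
  refine le_sInf ?_
  rintro _ ⟨t, rfl, Js, hJs, hcore⟩
  rw [hI.qType_localizedAt_core, hcore, localizedAt_iInf]
  refine (length_moduleSocle_quotient_iInf_le _).trans_eq ?_
  simp only [hI.length_moduleSocle_localizedAt (hJs _) hp, Finset.sum_const, Finset.card_univ,
    Fintype.card_fin, nsmul_eq_mul, mul_one]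

lemma exists_isMinimalReduction_coreSocle_inf_lt (hCM : IsCMLocalRing A) (hI : IsEquimultiple I g)
    (hCMloc : ∀ p : I.minimalPrimes, IsCMLocalRing (Localization.AtPrime p.1)) (H : Ideal A) :
    ∃ J, IsMinimalReduction J I ∧
      ∀ p : I.minimalPrimes, coreSocle p H ≠ ⊥ → coreSocle p (H ⊓ J) < coreSocle p H := by
  have hw (p : I.minimalPrimes) : ∃ w : Localization.AtPrime p.1, coreSocle p H ≠ ⊥ →
      w ∉ localizedAt p (core I) ∧ (localizedAt p (core I)).mkQ w ∈ coreSocle p H := by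
    by_cases h : coreSocle p H = ⊥
    · exact ⟨0, fun hne ↦ absurd h hne⟩
    · exact (exists_notMem_mkQ_mem_relSocle h).imp fun _ hb _ ↦ hb
  choose w hw using hw
  obtain ⟨J, hJ, hwJ⟩ := hI.exists_isMinimalReduction_forall_notMem hCMloc (w := w)
    {p | coreSocle p H ≠ ⊥} fun p hp ↦ by
      by_contra! hcon
      exact (hw p hp).1 (hI.mem_localizedAt_core hCM p hcon)
  refine ⟨J, hJ, fun p hp ↦ (relSocle_mono (Ideal.map_mono inf_le_left)).lt_of_not_ge fun hle ↦ ?_⟩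
  have hwp : (localizedAt p (core I)).mkQ (w p) ∈ coreSocle p J :=
    relSocle_mono (Ideal.map_mono inf_le_right) (hle (hw p hp).2)
  exact hwJ p hp (mem_of_mkQ_mem_relSocle (Ideal.map_mono (core_le hJ)) hwp)

/- Natural subtraction truncates at `0`, which covers the primes where the socle is already used up
before step `n`. -/
lemma exists_forall_length_coreSocle_iInf_le (hCM : IsCMLocalRing A) (hI : IsEquimultiple I g)
    (hCMloc : ∀ p : I.minimalPrimes, IsCMLocalRing (Localization.AtPrime p.1)) {t : ℕ}
    (ht : ∀ p : I.minimalPrimes,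
      qType (Localization.AtPrime p.1) (localizedAt p (core I)) ≤ t) (n : ℕ) :
    ∃ Js : Fin n → Ideal A, (∀ i, IsMinimalReduction (Js i) I) ∧ ∀ p : I.minimalPrimes,
      Module.length (Localization.AtPrime p.1) (coreSocle p (⨅ i, Js i)) ≤ (t - n : ℕ) := by
  induction n with
  | zero =>
    exact ⟨Fin.elim0, fun i ↦ i.elim0,
      fun p ↦ length_relSocle_le.trans (hI.qType_localizedAt_core p ▸ ht p)⟩
  | succ n ih =>
    obtain ⟨Js, hJs, hlen⟩ := ih
    obtain ⟨J, hJ, hlt⟩ := hI.exists_isMinimalReduction_coreSocle_inf_lt hCM hCMloc (⨅ i, Js i)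
    refine ⟨Fin.cons J Js, Fin.cases hJ hJs, fun p ↦ ?_⟩
    have hle : ⨅ i, (Fin.cons J Js : Fin (n + 1) → Ideal A) i ≤ (⨅ i, Js i) ⊓ J :=
      le_inf (le_iInf fun i ↦ iInf_le _ i.succ) (iInf_le _ 0)
    refine (length_mono (relSocle_mono (Ideal.map_mono hle))).trans ?_
    by_cases hbot : coreSocle p (⨅ i, Js i) = ⊥
    · rw [eq_bot_mono (relSocle_mono (Ideal.map_mono inf_le_left)) hbot, Module.length_bot]
      exact zero_le
    have hfin := ne_top_of_le_ne_top (ENat.natCast_ne_top _) (hlen p)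
    have hlt := (length_lt_length (hlt p hbot) (ne_top_of_le_ne_top hfin
      (length_mono (hlt p hbot).le))).trans_le (hlen p)
    lift Module.length (Localization.AtPrime p.1) (coreSocle p ((⨅ i, Js i) ⊓ J)) to ℕ
      using hlt.ne_top with l
    have hlt : l < t - n := by exact_mod_cast hlt
    exact_mod_cast show l ≤ t - (n + 1) by omega

lemma gamma_le (hCM : IsCMLocalRing A) (hI : IsEquimultiple I g)
    (hCMloc : ∀ p : I.minimalPrimes, IsCMLocalRing (Localization.AtPrime p.1)) {t : ℕ}
    (ht : ∀ p : I.minimalPrimes,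
      qType (Localization.AtPrime p.1) (localizedAt p (core I)) ≤ t) : gamma I ≤ t := by
  obtain ⟨Js, hJs, hlen⟩ := hI.exists_forall_length_coreSocle_iInf_le hCM hCMloc ht t
  refine sInf_le ⟨t, rfl, Js, hJs, le_antisymm (le_iInf fun i ↦ core_le (hJs i)) ?_⟩
  refine hI.le_core hCM fun p ↦ ?_
  obtain ⟨n, hn⟩ := hI.exists_pow_le_localizedAt_core p
  refine le_of_relSocle_eq_bot hn (Submodule.subsingleton_iff_eq_bot.mp ?_)
  refine (Module.length_eq_zero_iff (R := Localization.AtPrime p.1)).mp (nonpos_iff_eq_zero.mp ?_)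
  simpa only [Nat.sub_self, Nat.cast_zero] using hlen p

end IsEquimultiple

end Gamma

/-- Remark 2.4: for an equimultiple ideal in a local Cohen–Macaulay ring with
infinite residue field which is Gorenstein at the minimal primes of `I`,
`γ(I)` equals the maximal type of `(R / core I)` localized at a minimal prime of `I`. -/
theorem statement3 {R : Type u} [CommRing R] [IsNoetherianRing R] [IsLocalRing R]
    (hCM : IsCMLocalRing R) (hres : Infinite (ResidueField R))
    (I : Ideal R) (hequi : fiberDim I = ht I)
    (hGor : ∀ p : Ideal R, ∀ hp : p ∈ I.minimalPrimes,
      letI : p.IsPrime := hp.1.1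
      IsGorensteinLocalRing (Localization.AtPrime p)) :
    gamma I = sSup {t : ℕ∞ | ∃ p : Ideal R, ∃ hp : p ∈ I.minimalPrimes,
      letI : p.IsPrime := hp.1.1
      t = qType (Localization.AtPrime p)
        (Ideal.map (algebraMap R (Localization.AtPrime p)) (core I))} := by
  obtain ⟨g, hI⟩ := isEquimultiple_of_fiberDim_eq_ht hequi
  have hGor (p : I.minimalPrimes) : IsGorensteinLocalRing (Localization.AtPrime p.1) :=
    hGor p.1 p.2
  refine le_antisymm ?_ (sSup_le ?_)
  · have : Finite I.minimalPrimes := I.finite_minimalPrimes_of_isNoetherianRing R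
    have : Nonempty I.minimalPrimes := I.nonempty_minimalPrimes
      (hI.le_maximalIdeal.trans_lt (maximalIdeal.isMaximal R).ne_top.lt_top).ne
    obtain ⟨q, hq⟩ := Finite.exists_max fun p : I.minimalPrimes ↦
      qType (Localization.AtPrime p.1) (localizedAt p (core I))
    obtain ⟨t, ht⟩ := ENat.ne_top_iff_exists.mp (hI.qType_localizedAt_core_ne_top q)
    have hle : gamma I ≤ t :=
      hI.gamma_le hCM (fun p ↦ (hGor p).1) fun p ↦ (hq p).trans_eq ht.symm
    exact (hle.trans_eq ht).trans (le_sSup ⟨q.1, q.2, rfl⟩)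
  · rintro _ ⟨p, hp, rfl⟩
    exact hI.qType_localizedAt_core_le_gamma (hGor ⟨p, hp⟩)

end CPU
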